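/- arXiv:2108.10374 — 3 statements merged into one kernel-verified Lean document; each statement's English description precedes it below -/
import Mathlib

section
/- Let d ≥ 2, ε ∈ (0,1), γ > 0, and set δ = ε^{1+γ}/4. There exists a family 𝒩 of axis-parallel boxes in [0,1]^d of cardinality at most 7 d ln d · (1 + 1/γ)^d · (ln(e/ε^{1+γ}))^d / ε^{1+γ} such that every axis-parallel box B ⊆ [0,1]^d of volume at least ε contains some member B₀ ∈ 𝒩 with volume |B₀| ≥ δ. -/
lemma pow_sub_one_le {η : ℝ} (hη : 0 < η) (k : ℕ) :
    (1+η)^(k+1) - 1 ≤ (k+1) * (1+η)^k * η := by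
  induction k with
  | zero => simp
  | succ k ih =>
    have h1 : 0 < (1+η)^k := by positivity
    have h2 : (1:ℝ) ≤ (1+η)^k := one_le_pow₀ (by linarith)
    push_cast
    rw [pow_succ (1+η) (k+1), pow_succ (1+η) k] at *
    nlinarith [mul_le_mul_of_nonneg_right ih (by linarith : (0:ℝ) ≤ 1+η),
      mul_nonneg hη.le (sub_nonneg.2 h2), mul_nonneg hη.le (mul_nonneg hη.le h1.le)]

lemma interval_grid {η a b : ℝ} (hη : 0 < η) (hη1 : η < 1) (ha : 0 ≤ a) (hab : a < b) (hb : b ≤ 1) :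
    ∃ k j : ℕ, 1 ≤ j ∧ (j:ℝ) ≤ (k+2) * (1+η)^k ∧ (1+η)^k * (b-a) ≤ 1 ∧
      a ≤ j * (η * (1+η)⁻¹^(k+1)) ∧
      j * (η * (1+η)⁻¹^(k+1)) + (1-η) * (1+η)⁻¹^(k+1) ≤ b ∧
      (1-η)/(1+η) * (b-a) ≤ (1-η) * (1+η)⁻¹^(k+1) := by
  have hba : 0 < b - a := by linarith
  obtain ⟨k, hk1, hk2⟩ := exists_nat_pow_near (x := 1/(b-a)) (y := 1+η)
    (by rw [le_div_iff₀ hba]; linarith) (by linarith)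
  rw [le_div_iff₀ hba] at hk1
  rw [div_lt_iff₀ hba] at hk2
  set w : ℝ := (1+η)⁻¹^(k+1) with hw
  have hw0 : 0 < w := by positivity
  have hww : (1+η)^(k+1) * w = 1 := by
    rw [hw, ← mul_pow, mul_inv_cancel₀ (by positivity), one_pow]
  have hwb : w ≤ b - a := by
    have : w * 1 ≤ w * ((1+η)^(k+1) * (b-a)) := by gcongr
    calc w = w * 1 := by ring
      _ ≤ _ := this
      _ = ((1+η)^(k+1) * w) * (b-a) := by ring
      _ = b - a := by rw [hww]; ring
  have hs : 0 < η * w := by positivity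
  have hfl := Nat.floor_le (a := a / (η*w)) (by positivity)
  have hfl2 := Nat.lt_floor_add_one (a / (η*w))
  rw [le_div_iff₀ hs] at hfl
  rw [div_lt_iff₀ hs] at hfl2
  refine ⟨k, ⌊a / (η*w)⌋₊ + 1, by omega, ?_, hk1, ?_, ?_, ?_⟩
  · push_cast
    have h1 : (⌊a / (η*w)⌋₊ : ℝ) * η * w ≤ 1 - w := by nlinarith
    have h2 : (⌊a / (η*w)⌋₊ : ℝ) * η ≤ (1+η)^(k+1) - 1 := by
      have := mul_le_mul_of_nonneg_left h1 (by positivity : 0 ≤ (1+η)^(k+1))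
      calc (⌊a / (η*w)⌋₊ : ℝ) * η = (1+η)^(k+1) * w * (⌊a / (η*w)⌋₊ * η) := by rw [hww]; ring
        _ = (1+η)^(k+1) * (⌊a / (η*w)⌋₊ * η * w) := by ring
        _ ≤ _ := this
        _ = (1+η)^(k+1) - (1+η)^(k+1) * w := by ring
        _ = _ := by rw [hww]
    have h3 := h2.trans (pow_sub_one_le hη k)
    have h4 := le_of_mul_le_mul_right h3 hη
    have h5 : (1:ℝ) ≤ (1+η)^k := one_le_pow₀ (by linarith)
    linarith
  · push_cast; linarith
  · push_cast; nlinarith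
  · have : w = (1+η)⁻¹ * (1+η)⁻¹^k := by rw [hw, pow_succ]; ring
    rw [← hw, this, div_eq_mul_inv, mul_assoc]
    have h6 : b - a ≤ (1+η)⁻¹^k := by
      rw [inv_pow, ← one_div, le_div_iff₀ (by positivity)]
      linarith
    have : 0 < 1 - η := by linarith
    gcongr

lemma sum_geom_le {q : ℝ} (hq0 : 0 ≤ q) (hq : q < 1) (N : ℕ) :
    ∑ k ∈ Finset.range N, ((k:ℝ)+2) * q^k ≤ 2 * (1/(1-q))^2 := by
  have h : ∀ N : ℕ, (∑ k ∈ Finset.range N, ((k:ℝ)+2) * q^k) * (1-q)^2 =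
      2 - q - (N+2)*q^N + (N+1)*q^(N+1) := by
    intro N
    induction N with
    | zero => simp
    | succ N ih => rw [Finset.sum_range_succ, add_mul, ih]; push_cast; ring
  have h1 : 0 < 1 - q := by linarith
  have h2 := h N
  have h3 : 0 ≤ q^N := by positivity
  have h4 : ((N:ℝ)+1)*q^(N+1) ≤ (N+2)*q^N := by
    rw [pow_succ]
    have : (0:ℝ) ≤ N := by positivity
    nlinarith [mul_nonneg h3 h1.le, mul_nonneg (mul_nonneg h3 h1.le) this]
  rw [div_pow, one_pow, mul_one_div, le_div_iff₀ (by positivity)]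
  linarith

lemma grid_exists (d : ℕ) (hd : 0 < d) (η L σ : ℝ) (hη : 0 < η) (hη1 : η < 1) (hL : 0 < L)
    (hσ : σ = Real.log (1+η)) :
    ∃ X : Finset ((Fin d → ℝ) × (Fin d → ℝ)),
      (X.card : ℝ) ≤ Real.exp L * Real.exp (2*d) * (2 * (1 + L/(2*d*σ))^2)^d ∧
      (∀ p ∈ X, ∀ i, 0 ≤ p.1 i ∧ p.1 i < p.2 i ∧ p.2 i ≤ 1) ∧
      (∀ p ∈ X, Real.exp (-L) * ((1-η)/(1+η))^d ≤ ∏ i, (p.2 i - p.1 i)) ∧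
      ∀ a b : Fin d → ℝ, (∀ i, 0 ≤ a i ∧ a i < b i ∧ b i ≤ 1) →
        Real.exp (-L) ≤ ∏ i, (b i - a i) →
        ∃ p ∈ X, (∀ i, a i ≤ p.1 i ∧ p.2 i ≤ b i) := by
  classical
  have hσ0 : 0 < σ := by rw [hσ]; exact Real.log_pos (by linarith)
  have hes : ∀ n : ℕ, (1+η)^n = Real.exp (σ * n) := by
    intro n
    rw [Real.exp_mul, hσ, Real.exp_log (by linarith), Real.rpow_natCast]
  have hd' : (0:ℝ) < d := by exact_mod_cast hd
  set N : ℕ := ⌊L/σ⌋₊ + 1 with hN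
  set K : Finset (Fin d → ℕ) := (Fintype.piFinset (fun _ => Finset.range N)).filter
    (fun k => σ * ((∑ i, k i : ℕ) : ℝ) ≤ L) with hK
  set nn : ℕ → ℕ := fun k => ⌊((k:ℝ)+2) * (1+η)^k⌋₊ with hnn
  set J : (Fin d → ℕ) → Finset (Fin d → ℕ) :=
    fun k => Fintype.piFinset (fun i => Finset.Icc 1 (nn (k i))) with hJ
  set box : (Fin d → ℕ) → (Fin d → ℕ) → (Fin d → ℝ) × (Fin d → ℝ) := fun k j =>
    (fun i => j i * (η * (1+η)⁻¹^(k i+1)),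
     fun i => j i * (η * (1+η)⁻¹^(k i+1)) + (1-η) * (1+η)⁻¹^(k i+1)) with hbox
  set X0 := K.biUnion (fun k => (J k).image (box k)) with hX0
  refine ⟨X0.filter (fun p => (∀ i, 0 ≤ p.1 i ∧ p.1 i < p.2 i ∧ p.2 i ≤ 1) ∧
    Real.exp (-L) * ((1-η)/(1+η))^d ≤ ∏ i, (p.2 i - p.1 i)), ?_, ?_, ?_, ?_⟩
  · set q : ℝ := Real.exp (-(2*d*σ/L)) with hq
    have hx : 0 < 2*d*σ/L := by positivity
    have hq0 : 0 < q := Real.exp_pos _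
    have hq1 : q < 1 := by rw [hq, Real.exp_lt_one_iff]; linarith
    have hqq : 1/(1-q) ≤ 1 + L/(2*d*σ) := by
      have h1 : q ≤ 1/(1 + 2*d*σ/L) := by
        rw [hq, Real.exp_neg, ← one_div]
        apply one_div_le_one_div_of_le (by positivity)
        have := Real.add_one_le_exp (2*d*σ/L)
        linarith
      have h2 : 1/(1 + L/(2*d*σ)) ≤ 1 - q := by
        have : 1/(1 + L/(2*d*σ)) + 1/(1 + 2*d*σ/L) = 1 := by field_simp; ring
        linarith
      rw [div_le_iff₀ (by linarith)]
      rw [div_le_iff₀ (by positivity)] at h2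
      linarith
    have hc1 : ((X0.card : ℕ) : ℝ) ≤ ∑ k ∈ K, ∏ i, (((k i : ℝ)+2) * (1+η)^(k i)) := by
      have : X0.card ≤ ∑ k ∈ K, ∏ i, nn (k i) := by
        refine Finset.card_biUnion_le.trans (Finset.sum_le_sum fun k _ => ?_)
        refine Finset.card_image_le.trans ?_
        simp [hJ, Fintype.card_piFinset]
      calc (X0.card : ℝ) ≤ ((∑ k ∈ K, ∏ i, nn (k i) : ℕ) : ℝ) := by exact_mod_cast this
        _ = ∑ k ∈ K, ∏ i, (nn (k i) : ℝ) := by push_cast; rfl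
        _ ≤ _ := by
          apply Finset.sum_le_sum
          intro k _
          apply Finset.prod_le_prod (fun i _ => by positivity)
          intro i _
          exact Nat.floor_le (by positivity)
    have hc2 : ∀ k ∈ K, ∏ i, (((k i : ℝ)+2) * (1+η)^(k i)) ≤
        Real.exp L * Real.exp (2*d) * ∏ i, (((k i : ℝ)+2) * q^(k i)) := by
      intro k hk
      have hkL : σ * ((∑ i, k i : ℕ) : ℝ) ≤ L := (Finset.mem_filter.1 hk).2
      rw [Finset.prod_mul_distrib, Finset.prod_mul_distrib, Finset.prod_pow_eq_pow_sum,
        Finset.prod_pow_eq_pow_sum, hes]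
      have h1 : Real.exp (σ * ((∑ i, k i : ℕ) : ℝ)) ≤ Real.exp L := Real.exp_le_exp.2 hkL
      have h2 : 1 ≤ Real.exp (2*d) * q^(∑ i, k i) := by
        rw [hq, ← Real.exp_nat_mul, ← Real.exp_add, Real.one_le_exp_iff]
        have : ((∑ i, k i : ℕ) : ℝ) * (2*d*σ/L) ≤ 2*d := by
          rw [← mul_div_assoc, div_le_iff₀ hL]
          nlinarith
        linarith
      have h3 : 0 ≤ ∏ i, ((k i : ℝ)+2) := by positivity
      calc (∏ i, ((k i : ℝ)+2)) * Real.exp (σ * ((∑ i, k i : ℕ) : ℝ))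
          ≤ (∏ i, ((k i : ℝ)+2)) * (Real.exp L * 1) := by rw [mul_one]; gcongr
        _ ≤ (∏ i, ((k i : ℝ)+2)) * (Real.exp L * (Real.exp (2*d) * q^(∑ i, k i))) := by gcongr
        _ = _ := by ring
    have hc3 : ∑ k ∈ Fintype.piFinset (fun _ : Fin d => Finset.range N),
        ∏ i, (((k i : ℝ)+2) * q^(k i)) ≤ (2 * (1 + L/(2*d*σ))^2)^d := by
      rw [← Finset.prod_univ_sum (fun _ : Fin d => Finset.range N)
        (fun _ k => ((k : ℝ)+2) * q^k)]
      simp only [Finset.prod_const, Finset.card_univ, Fintype.card_fin]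
      have : 0 < 1 - q := by linarith
      gcongr
      refine (sum_geom_le hq0.le hq1 N).trans ?_
      gcongr
    calc (((X0.filter _).card : ℕ) : ℝ) ≤ X0.card := by exact_mod_cast Finset.card_filter_le _ _
      _ ≤ _ := hc1
      _ ≤ _ := Finset.sum_le_sum hc2
      _ = Real.exp L * Real.exp (2*d) * ∑ k ∈ K, ∏ i, (((k i : ℝ)+2) * q^(k i)) := by
        rw [Finset.mul_sum]
      _ ≤ Real.exp L * Real.exp (2*d) * ∑ k ∈ Fintype.piFinset (fun _ : Fin d => Finset.range N),
        ∏ i, (((k i : ℝ)+2) * q^(k i)) := by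
        gcongr
        exact Finset.filter_subset _ _
      _ ≤ _ := by gcongr
  · intro p hp
    exact (Finset.mem_filter.1 hp).2.1
  · intro p hp
    exact (Finset.mem_filter.1 hp).2.2
  · intro a b hab hvol
    have hg := fun i => interval_grid hη hη1 (hab i).1 (hab i).2.1 (hab i).2.2
    choose k j hj1 hj2 hk hja hjb hv using hg
    have hsum : σ * ((∑ i, k i : ℕ) : ℝ) ≤ L := by
      have h1 : ∏ i, ((1+η)^(k i) * (b i - a i)) ≤ 1 := by
        apply Finset.prod_le_one
        · intro i _
          have := (hab i).2.1
          exact mul_nonneg (by positivity) (by linarith)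
        · intro i _; exact hk i
      rw [Finset.prod_mul_distrib, Finset.prod_pow_eq_pow_sum, hes] at h1
      have h2 := (mul_le_mul_of_nonneg_left hvol (Real.exp_pos (σ * ((∑ i, k i : ℕ) : ℝ))).le).trans h1
      rw [← Real.exp_add, Real.exp_le_one_iff] at h2
      linarith
    refine ⟨box k j, Finset.mem_filter.2 ⟨?_, ?_, ?_⟩, fun i => ⟨hja i, hjb i⟩⟩
    · rw [hX0, Finset.mem_biUnion]
      refine ⟨k, ?_, Finset.mem_image_of_mem _ ?_⟩
      · rw [hK, Finset.mem_filter]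
        refine ⟨Fintype.mem_piFinset.2 fun i => Finset.mem_range.2 ?_, hsum⟩
        have h1 : k i ≤ ∑ i, k i := Finset.single_le_sum (fun _ _ => Nat.zero_le _) (Finset.mem_univ i)
        have h2 : ∑ i, k i ≤ ⌊L/σ⌋₊ := by
          apply Nat.le_floor
          rw [le_div_iff₀ hσ0]; linarith
        omega
      · exact Fintype.mem_piFinset.2 fun i => Finset.mem_Icc.2 ⟨hj1 i, Nat.le_floor (hj2 i)⟩
    · intro i
      refine ⟨(hab i).1.trans (hja i), ?_, (hjb i).trans (hab i).2.2⟩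
      simp only [hbox]
      have : 0 < (1-η) * (1+η)⁻¹^(k i+1) := mul_pos (by linarith) (by positivity)
      linarith
    · have : ∏ i, ((1-η)/(1+η) * (b i - a i)) ≤ ∏ i, ((box k j).2 i - (box k j).1 i) := by
        apply Finset.prod_le_prod
        · intro i _
          have := (hab i).2.1
          exact mul_nonneg (div_nonneg (by linarith) (by linarith)) (by linarith)
        · intro i _
          simp only [hbox]
          have := hv i
          linarith
      refine le_trans ?_ this
      rw [Finset.prod_mul_distrib, mul_comm]
      simp only [Finset.prod_const, Finset.card_univ, Fintype.card_fin]
      have : 0 ≤ (1-η)/(1+η) := div_nonneg (by linarith) (by linarith)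
      gcongr
open MeasureTheory in
noncomputable def simpT (d : ℕ) (S : ℝ) : ENNReal :=
  ∫⁻ u : Fin d → ℝ, {u : Fin d → ℝ | ∑ i, u i ≤ S}.indicator
    (fun u => ∏ i, ENNReal.ofReal (Real.exp (u i) - 1)) u

def covSet (d : ℕ) (a b : Fin d → ℝ) (M : ℝ) : Set ((Fin d → ℝ) × (Fin d → ℝ)) :=
  {p | (∀ i, a i ≤ p.2 i ∧ p.2 i + Real.exp (-p.1 i) ≤ b i) ∧ ∑ i, p.1 i ≤ M}

open MeasureTheory in
noncomputable def boxMu (d : ℕ) : Measure ((Fin d → ℝ) × (Fin d → ℝ)) :=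
  ((volume : Measure (Fin d → ℝ)).prod (volume : Measure (Fin d → ℝ))).withDensity
    (fun p => ENNReal.ofReal (Real.exp (∑ i, p.1 i)))

lemma measurableSet_covSet (d : ℕ) (a b : Fin d → ℝ) (M : ℝ) :
    MeasurableSet (covSet d a b M) := by
  have : IsClosed (covSet d a b M) := by
    unfold covSet
    simp only [Set.ofPred_and, Set.ofPred_forall]
    apply IsClosed.inter
    · apply isClosed_iInter
      intro i
      exact (isClosed_le (by fun_prop) (by fun_prop)).inter
        (isClosed_le (by fun_prop) (by fun_prop))
    · exact isClosed_le (by fun_prop) (by fun_prop)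
  exact this.measurableSet

lemma measurableSet_sumle (d : ℕ) (M : ℝ) :
    MeasurableSet {u : Fin d → ℝ | ∑ i, u i ≤ M} :=
  (isClosed_le (by fun_prop) (by fun_prop)).measurableSet

open MeasureTheory in
lemma boxMu_covSet (d : ℕ) (a b : Fin d → ℝ) (M : ℝ) (hab : ∀ i, a i < b i) :
    boxMu d (covSet d a b M) = simpT d (M + ∑ i, Real.log (b i - a i)) := by
  have hm := measurableSet_covSet d a b M
  have hw : Measurable (fun p : (Fin d → ℝ) × (Fin d → ℝ) =>
      ENNReal.ofReal (Real.exp (∑ i, p.1 i))) := by fun_prop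
  unfold boxMu
  rw [withDensity_apply _ hm, ← lintegral_indicator hm, lintegral_prod _
    (hw.indicator hm).aemeasurable]
  set c : Fin d → ℝ := fun i => Real.log (b i - a i) with hc
  unfold simpT
  refine Eq.trans ?_ (lintegral_add_right_eq_self (μ := (volume : Measure (Fin d → ℝ))) _ c)
  apply lintegral_congr
  intro u
  have hsum : ∑ i, (u + c) i ≤ M + ∑ i, c i ↔ ∑ i, u i ≤ M := by
    simp [Finset.sum_add_distrib]
  by_cases hu : ∑ i, u i ≤ M
  · have h1 : ∀ v, (covSet d a b M).indicator (fun p : (Fin d → ℝ) × (Fin d → ℝ) =>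
      ENNReal.ofReal (Real.exp (∑ i, p.1 i))) (u, v) =
        (Set.Icc a (fun i => b i - Real.exp (-u i))).indicator
          (fun _ => ENNReal.ofReal (Real.exp (∑ i, u i))) v := by
      intro v
      have : (u, v) ∈ covSet d a b M ↔ v ∈ Set.Icc a (fun i => b i - Real.exp (-u i)) := by
        simp only [covSet, Set.mem_ofPred_eq, Set.mem_Icc, Pi.le_def]
        constructor
        · rintro ⟨h, _⟩
          exact ⟨fun i => (h i).1, fun i => by have := (h i).2; linarith⟩
        · rintro ⟨h, h'⟩
          exact ⟨fun i => ⟨h i, by have := h' i; linarith⟩, hu⟩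
      by_cases h : (u, v) ∈ covSet d a b M
      · rw [Set.indicator_of_mem h, Set.indicator_of_mem (this.1 h)]
      · rw [Set.indicator_of_notMem h, Set.indicator_of_notMem (fun h' => h (this.2 h'))]
    simp_rw [h1]
    rw [lintegral_indicator measurableSet_Icc, lintegral_const, Measure.restrict_apply_univ,
      Real.volume_Icc_pi, Set.indicator_of_mem (show u + c ∈ {u : Fin d → ℝ | ∑ i, u i ≤ M + ∑ i, c i} from hsum.2 hu), Real.exp_sum,
      ENNReal.ofReal_prod_of_nonneg (fun i _ => (Real.exp_pos _).le), ← Finset.prod_mul_distrib]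
    apply Finset.prod_congr rfl
    intro i _
    rw [← ENNReal.ofReal_mul (Real.exp_pos _).le]
    congr 1
    simp only [Pi.add_apply, hc]
    rw [Real.exp_add, Real.exp_log (sub_pos.2 (hab i))]
    have : Real.exp (u i) * Real.exp (-u i) = 1 := by rw [← Real.exp_add]; simp
    linear_combination -this
  · rw [Set.indicator_of_notMem (show ¬ (u + c ∈ {u : Fin d → ℝ | ∑ i, u i ≤ M + ∑ i, c i}) from fun h => hu (hsum.1 h))]
    rw [lintegral_eq_zero_of_ae_eq_zero]
    apply Filter.Eventually.of_forall
    intro v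
    dsimp only
    rw [Set.indicator_of_notMem]
    · rfl
    · rintro ⟨_, h⟩
      exact hu h

lemma simpT_mono (d : ℕ) {S S' : ℝ} (h : S ≤ S') : simpT d S ≤ simpT d S' := by
  apply MeasureTheory.lintegral_mono
  intro u
  apply Set.indicator_le_indicator_of_subset
  · intro v hv
    exact le_trans hv h
  · intro v; exact bot_le

lemma simpT_lt_top (d : ℕ) (S : ℝ) : simpT d S < ⊤ := by
  have : simpT d S ≤ ∫⁻ u : Fin d → ℝ, (Set.Icc (0 : Fin d → ℝ) (fun _ => S)).indicator
      (fun _ => (ENNReal.ofReal (Real.exp S)) ^ d) u := by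
    apply MeasureTheory.lintegral_mono
    intro u
    dsimp only
    by_cases hu : ∑ i, u i ≤ S
    · rw [Set.indicator_of_mem (by simpa using hu)]
      by_cases hpos : ∀ i, 0 ≤ u i
      · have hle : ∀ i, u i ≤ S := fun i =>
          (Finset.single_le_sum (fun j _ => hpos j) (Finset.mem_univ i)).trans hu
        rw [Set.indicator_of_mem (show u ∈ Set.Icc (0 : Fin d → ℝ) (fun _ => S) from ⟨hpos, hle⟩)]
        calc _ ≤ ∏ _i : Fin d, ENNReal.ofReal (Real.exp S) := by
              apply Finset.prod_le_prod' 
              intro i _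
              apply ENNReal.ofReal_le_ofReal
              have := Real.exp_le_exp.2 (hle i)
              linarith
          _ = _ := by simp
      · push Not at hpos
        obtain ⟨i, hi⟩ := hpos
        rw [Finset.prod_eq_zero (Finset.mem_univ i)]
        · exact bot_le
        · rw [ENNReal.ofReal_eq_zero]
          have := Real.exp_lt_exp.2 hi
          rw [Real.exp_zero] at this
          linarith
    · rw [Set.indicator_of_notMem (by simpa using hu)]
      exact bot_le
  refine this.trans_lt ?_
  rw [MeasureTheory.lintegral_indicator measurableSet_Icc, MeasureTheory.lintegral_const,
    MeasureTheory.Measure.restrict_apply_univ, Real.volume_Icc_pi]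
  exact ENNReal.mul_lt_top (by finiteness) (ENNReal.prod_lt_top (fun i _ => ENNReal.ofReal_lt_top))

lemma simpT_pos (d : ℕ) (S : ℝ) (hS : 0 < S) (hd : 0 < d) : 0 < simpT d S := by
  have hd' : (0:ℝ) < d := by exact_mod_cast hd
  have : ∫⁻ u : Fin d → ℝ, (Set.Icc (fun _ => S/(2*d) : Fin d → ℝ) (fun _ => S/d)).indicator
      (fun _ => (ENNReal.ofReal (Real.exp (S/(2*d)) - 1)) ^ d) u ≤ simpT d S := by
    apply MeasureTheory.lintegral_mono
    intro u
    dsimp only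
    by_cases hu : u ∈ Set.Icc (fun _ => S/(2*d) : Fin d → ℝ) (fun _ => S/d)
    · have : ∑ i, u i ≤ S := by
        calc ∑ i, u i ≤ ∑ _i : Fin d, S/d := Finset.sum_le_sum (fun i _ => hu.2 i)
          _ = S := by simp; field_simp
      rw [Set.indicator_of_mem hu, Set.indicator_of_mem (by simpa using this)]
      calc _ = ∏ _i : Fin d, ENNReal.ofReal (Real.exp (S/(2*d)) - 1) := by simp
        _ ≤ _ := by
          apply Finset.prod_le_prod'
          intro i _
          apply ENNReal.ofReal_le_ofReal
          have := Real.exp_le_exp.2 (hu.1 i)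
          linarith
    · rw [Set.indicator_of_notMem hu]
      exact bot_le
  refine lt_of_lt_of_le ?_ this
  rw [MeasureTheory.lintegral_indicator measurableSet_Icc, MeasureTheory.lintegral_const,
    MeasureTheory.Measure.restrict_apply_univ, Real.volume_Icc_pi]
  have h1 : 0 < Real.exp (S/(2*d)) - 1 := by
    have := Real.add_one_lt_exp (x := S/(2*d)) (by positivity)
    have : 0 < S/(2*d) := by positivity
    linarith
  have h2 : 0 < S/d - S/(2*d) := by
    have : S/d - S/(2*d) = S/(2*d) := by field_simp; ring
    rw [this]; positivity
  simp only [Finset.prod_const]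
  apply ENNReal.mul_pos
  · exact pow_ne_zero _ (ENNReal.ofReal_pos.2 h1).ne'
  · exact pow_ne_zero _ (ENNReal.ofReal_pos.2 h2).ne'

lemma exp_scale {c v : ℝ} (hc : 1 ≤ c) :
    Real.exp (c * v) - 1 ≤ c * Real.exp ((c-1)*v) * (Real.exp v - 1) := by
  have h := one_add_mul_self_le_rpow_one_add (s := Real.exp (-v) - 1)
    (by have := Real.exp_pos (-v); linarith) hc
  rw [add_sub_cancel, ← Real.exp_mul] at h
  have h3 := mul_le_mul_of_nonneg_left h (Real.exp_pos (c*v)).le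
  have e1 : Real.exp (c*v) * Real.exp (-v * c) = 1 := by
    rw [← Real.exp_add]; ring_nf; simp
  have e2 : Real.exp (c*v) * Real.exp (-v) = Real.exp ((c-1)*v) := by
    rw [← Real.exp_add]; ring_nf
  have e3 : Real.exp ((c-1)*v) * Real.exp v = Real.exp (c*v) := by
    rw [← Real.exp_add]; ring_nf
  rw [e1] at h3
  nlinarith

open MeasureTheory in
lemma simpT_scale (d : ℕ) (c S : ℝ) (hc : 1 ≤ c) :
    simpT d (c * S) ≤ ENNReal.ofReal (c ^ (2*d) * Real.exp ((c-1)*S)) * simpT d S := by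
  have hc0 : 0 < c := by linarith
  set f : (Fin d → ℝ) → ENNReal := {u : Fin d → ℝ | ∑ i, u i ≤ c * S}.indicator
    (fun u => ∏ i, ENNReal.ofReal (Real.exp (u i) - 1)) with hf
  have hfm : Measurable f := by
    apply Measurable.indicator _ (measurableSet_sumle d _)
    fun_prop
  have hmap := Measure.map_addHaar_smul (volume : Measure (Fin d → ℝ)) hc0.ne'
  have h1 : ∫⁻ u, f (c • u) = ENNReal.ofReal ((c^d)⁻¹) * ∫⁻ u, f u := by
    rw [← lintegral_map hfm (by fun_prop : Measurable (fun x : Fin d → ℝ => c • x)), hmap,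
      lintegral_smul_measure]
    simp [abs_of_pos hc0]
  have h2 : simpT d (c * S) = ENNReal.ofReal (c^d) * ∫⁻ u, f (c • u) := by
    rw [h1, ← mul_assoc, ← ENNReal.ofReal_mul (by positivity), mul_inv_cancel₀ (by positivity)]
    simp [simpT, hf]
  have h3 : ∫⁻ u, f (c • u) ≤ ENNReal.ofReal (c^d * Real.exp ((c-1)*S)) * simpT d S := by
    unfold simpT
    rw [← lintegral_const_mul' _ _ ENNReal.ofReal_ne_top]
    apply lintegral_mono
    intro u
    simp only [hf]
    have hiff : ∑ i, (c • u) i ≤ c * S ↔ ∑ i, u i ≤ S := by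
      simp only [Pi.smul_apply, smul_eq_mul, ← Finset.mul_sum]
      exact mul_le_mul_iff_right₀ hc0
    by_cases hu : ∑ i, u i ≤ S
    · rw [Set.indicator_of_mem (by simpa using hiff.2 hu), Set.indicator_of_mem (by simpa using hu)]
      calc ∏ i, ENNReal.ofReal (Real.exp ((c • u) i) - 1)
          ≤ ∏ i, (ENNReal.ofReal (c * Real.exp ((c-1)*u i)) * ENNReal.ofReal (Real.exp (u i) - 1)) := by
            apply Finset.prod_le_prod'
            intro i _
            rw [← ENNReal.ofReal_mul (by positivity)]
            exact ENNReal.ofReal_le_ofReal (exp_scale hc)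
        _ = ENNReal.ofReal (c^d * Real.exp ((c-1)*∑ i, u i)) *
            ∏ i, ENNReal.ofReal (Real.exp (u i) - 1) := by
            rw [Finset.prod_mul_distrib, ← ENNReal.ofReal_prod_of_nonneg
              (fun i _ => by positivity), Finset.prod_mul_distrib, ← Real.exp_sum,
              ← Finset.mul_sum]
            simp
        _ ≤ _ := by
            gcongr
    · rw [Set.indicator_of_notMem (show ¬ (c • u ∈ {u : Fin d → ℝ | ∑ i, u i ≤ c * S}) from fun h => hu (hiff.1 h))]
      exact bot_le
  rw [h2]
  calc _ ≤ ENNReal.ofReal (c^d) * (ENNReal.ofReal (c^d * Real.exp ((c-1)*S)) * simpT d S) := by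
        gcongr
    _ = _ := by
        rw [← mul_assoc, ← ENNReal.ofReal_mul (by positivity)]
        congr 2
        ring
open MeasureTheory in
/-- averaging: some point lies in many of the sets -/
lemma exists_point_many {X Y : Type*} [MeasurableSpace Y] (μ : Measure Y) (s : Finset X)
    (cov : X → Set Y) (Y0 : Set Y) (hm : ∀ x, MeasurableSet (cov x))
    (hsub : ∀ x ∈ s, cov x ⊆ Y0) (C : ENNReal) (hC : 0 < C) (hCt : C < ⊤)
    (hcov : ∀ x ∈ s, C ≤ μ (cov x)) (R : ℝ) (hR : 0 < R)
    (hY : μ Y0 ≤ ENNReal.ofReal R * C) (hs : s.Nonempty) :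
    ∃ y ∈ Y0, ∃ s' ⊆ s, (∀ x ∈ s', y ∈ cov x) ∧ (s.card : ℝ) / R ≤ (s'.card : ℝ) := by
  classical
  by_contra hcon
  push Not at hcon
  have hlt : ∀ y ∈ Y0, ((s.filter (fun x => y ∈ cov x)).card : ℝ) < s.card / R := by
    intro y hy
    exact hcon y hy _ (Finset.filter_subset _ _) (fun x hx => (Finset.mem_filter.1 hx).2)
  have hfun : ∀ y, ∑ x ∈ s, (cov x).indicator (fun _ => (1 : ENNReal)) y =
      ((s.filter (fun x => y ∈ cov x)).card : ENNReal) := by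
    intro y
    simp [Set.indicator_apply, Finset.sum_ite]
  -- max value of counts
  obtain ⟨m, hm1, hm2⟩ : ∃ m : ℕ, (∀ y ∈ Y0, (s.filter (fun x => y ∈ cov x)).card ≤ m) ∧
      (m : ℝ) < s.card / R := by
    have hpos : 0 < (s.card : ℝ) / R := by
      have : 0 < s.card := hs.card_pos
      positivity
    refine ⟨⌈(s.card : ℝ) / R⌉₊ - 1, fun y hy => ?_, ?_⟩
    · have := hlt y hy
      have : (s.filter (fun x => y ∈ cov x)).card < ⌈(s.card : ℝ) / R⌉₊ := Nat.lt_ceil.2 this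
      omega
    · have h1 : 0 < ⌈(s.card : ℝ) / R⌉₊ := Nat.ceil_pos.2 hpos
      exact Nat.lt_ceil.1 (by omega)
  have h1 : ∑ x ∈ s, μ (cov x) ≤ m * μ Y0 := by
    calc ∑ x ∈ s, μ (cov x) = ∑ x ∈ s, ∫⁻ y, (cov x).indicator (fun _ => (1 : ENNReal)) y ∂μ := by
          apply Finset.sum_congr rfl
          intro x _
          rw [lintegral_indicator (hm x)]; simp
      _ = ∫⁻ y, ∑ x ∈ s, (cov x).indicator (fun _ => (1 : ENNReal)) y ∂μ := by
          rw [lintegral_finsetSum]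
          intro x _
          exact measurable_const.indicator (hm x)
      _ ≤ ∫⁻ y, Y0.indicator (fun _ => (m : ENNReal)) y ∂μ := by
          apply lintegral_mono
          intro y
          dsimp only
          rw [hfun]
          by_cases hy : y ∈ Y0
          · rw [Set.indicator_of_mem hy]
            exact_mod_cast hm1 y hy
          · have : s.filter (fun x => y ∈ cov x) = ∅ := by
              apply Finset.filter_false_of_mem
              intro x hx hxy
              exact hy (hsub x hx hxy)
            rw [this]; simp
      _ ≤ m * μ Y0 := lintegral_indicator_const_le _ _
  have h2 : (s.card : ENNReal) * C ≤ ∑ x ∈ s, μ (cov x) := by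
    calc (s.card : ENNReal) * C = ∑ _x ∈ s, C := by simp
      _ ≤ _ := Finset.sum_le_sum hcov
  have h3 : (s.card : ENNReal) * C ≤ (m * ENNReal.ofReal R) * C := by
    refine (h2.trans h1).trans ?_
    rw [mul_assoc]
    gcongr
  have h4 : (s.card : ENNReal) ≤ m * ENNReal.ofReal R :=
    (ENNReal.mul_le_mul_iff_left hC.ne' hCt.ne).1 h3
  have h5 : (s.card : ℝ) ≤ m * R := by
    have := ENNReal.toReal_mono (by finiteness) h4
    simpa [ENNReal.toReal_mul, ENNReal.toReal_ofReal hR.le] using this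
  rw [lt_div_iff₀ hR] at hm2
  linarith

/-- greedy covering -/
lemma greedy_cover {X Y : Type*} (s : Finset X) (cov : X → Set Y) (Y0 : Set Y)
    (R : ℝ) (hR : 1 ≤ R)
    (h : ∀ t ⊆ s, t.Nonempty → ∃ y ∈ Y0, ∃ s' ⊆ t, (∀ x ∈ s', y ∈ cov x) ∧
      (t.card : ℝ) / R ≤ (s'.card : ℝ)) (n : ℕ) :
    ∃ N : Finset Y, N.card ≤ n ∧ (∀ y ∈ N, y ∈ Y0) ∧ ∃ t ⊆ s,
      (∀ x ∈ s, x ∈ t ∨ ∃ y ∈ N, y ∈ cov x) ∧ (t.card : ℝ) ≤ s.card * (1 - 1/R)^n := by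
  classical
  have hR0 : 0 < R := by linarith
  have hq : 0 ≤ 1 - 1/R := by
    rw [sub_nonneg, div_le_one hR0]; exact hR
  induction n with
  | zero => exact ⟨∅, by simp, by simp, s, subset_rfl, fun x hx => Or.inl hx, by simp⟩
  | succ n ih =>
    obtain ⟨N, hN, hNY, t, hts, hc, hcard⟩ := ih
    rcases t.eq_empty_or_nonempty with rfl | hne
    · refine ⟨N, by omega, hNY, ∅, by simp, hc, ?_⟩
      simp only [Finset.card_empty, Nat.cast_zero]
      positivity
    · obtain ⟨y, hy, s', hs't, hy', hs'⟩ := h t hts hne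
      refine ⟨insert y N, (Finset.card_insert_le _ _).trans (by omega), ?_, t \ s', ?_, ?_, ?_⟩
      · intro z hz
        rcases Finset.mem_insert.1 hz with rfl | hz
        · exact hy
        · exact hNY z hz
      · exact Finset.sdiff_subset.trans hts
      · intro x hx
        rcases hc x hx with hxt | ⟨z, hz, hzx⟩
        · by_cases hxs : x ∈ s'
          · exact Or.inr ⟨y, Finset.mem_insert_self _ _, hy' x hxs⟩
          · exact Or.inl (Finset.mem_sdiff.2 ⟨hxt, hxs⟩)
        · exact Or.inr ⟨z, Finset.mem_insert_of_mem hz, hzx⟩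
      · have e := Finset.card_sdiff_add_card_eq_card hs't
        have e' : ((t \ s').card : ℝ) = t.card - s'.card := by
          rw [← e]; push_cast; ring
        rw [e', pow_succ]
        calc (t.card : ℝ) - s'.card ≤ t.card * (1 - 1/R) := by
              have : (t.card : ℝ) * (1 - 1/R) = t.card - t.card / R := by ring
              linarith
          _ ≤ (s.card * (1 - 1/R)^n) * (1 - 1/R) := by gcongr
          _ = _ := by ring
lemma combine_cover (d : ℕ) (hd : 0 < d) (L U β t R : ℝ) (hL : 0 < L) (hβ : 0 ≤ β) (hβU : β < U)
    (ht : 0 ≤ t) (hR : R = Real.exp (L+β) * ((L+U)/(U-β))^(2*d))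
    (X : Finset ((Fin d → ℝ) × (Fin d → ℝ)))
    (hXval : ∀ p ∈ X, ∀ i, 0 ≤ p.1 i ∧ p.1 i < p.2 i ∧ p.2 i ≤ 1)
    (hXvol : ∀ p ∈ X, Real.exp (-(L+β)) ≤ ∏ i, (p.2 i - p.1 i))
    (hXcov : ∀ a b : Fin d → ℝ, (∀ i, 0 ≤ a i ∧ a i < b i ∧ b i ≤ 1) →
        Real.exp (-L) ≤ ∏ i, (b i - a i) → ∃ p ∈ X, (∀ i, a i ≤ p.1 i ∧ p.2 i ≤ b i))
    (hXcard : (X.card : ℝ) ≤ R * Real.exp t) :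
    ∃ 𝒩 : Finset ((Fin d → ℝ) × (Fin d → ℝ)), (𝒩.card : ℝ) ≤ R * (t+1) + 1 ∧
      (∀ p ∈ 𝒩, ∀ i, 0 ≤ p.1 i ∧ p.1 i ≤ p.2 i ∧ p.2 i ≤ 1) ∧
      ∀ a b : Fin d → ℝ, (∀ i, 0 ≤ a i ∧ a i < b i ∧ b i ≤ 1) →
        Real.exp (-L) ≤ ∏ i, (b i - a i) →
        ∃ p ∈ 𝒩, (∀ i, a i ≤ p.1 i ∧ p.2 i ≤ b i) ∧ Real.exp (-(L+U)) ≤ ∏ i, (p.2 i - p.1 i) := by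
  classical
  have hS : 0 < U - β := by linarith
  set c : ℝ := (L+U)/(U-β) with hc
  have hc1 : 1 ≤ c := by rw [hc, le_div_iff₀ hS]; linarith
  have hcS : c * (U-β) = L+U := by rw [hc]; field_simp
  have hR1 : 1 ≤ R := by
    rw [hR]
    exact one_le_mul_of_one_le_of_one_le (Real.one_le_exp (by linarith)) (one_le_pow₀ hc1)
  have hR0 : 0 < R := by linarith
  have hRc : c^(2*d) * Real.exp ((c-1)*(U-β)) = R := by
    have : (c-1)*(U-β) = L+β := by linarith
    rw [hR, this]; ring
  set Y0 := covSet d 0 1 (L+U) with hY0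
  set cov : (Fin d → ℝ) × (Fin d → ℝ) → Set ((Fin d → ℝ) × (Fin d → ℝ)) :=
    fun x => covSet d x.1 x.2 (L+U) with hcov
  have hsub : ∀ x ∈ X, cov x ⊆ Y0 := by
    intro x hx y hy
    refine ⟨fun i => ⟨((hXval x hx i).1).trans (hy.1 i).1, ((hy.1 i).2).trans (hXval x hx i).2.2⟩, hy.2⟩
  have hYm : boxMu d Y0 ≤ ENNReal.ofReal R * simpT d (U-β) := by
    rw [hY0, boxMu_covSet d 0 1 (L+U) (fun i => by simp)]
    simp only [Pi.one_apply, Pi.zero_apply, sub_zero, Real.log_one, Finset.sum_const_zero, add_zero]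
    rw [← hcS, ← hRc]
    exact simpT_scale d c (U-β) hc1
  have hcovm : ∀ x ∈ X, simpT d (U-β) ≤ boxMu d (cov x) := by
    intro x hx
    rw [hcov]
    dsimp only
    rw [boxMu_covSet d _ _ _ (fun i => (hXval x hx i).2.1)]
    apply simpT_mono
    rw [← Real.log_prod (fun i _ => (sub_pos.2 (hXval x hx i).2.1).ne')]
    have := Real.log_le_log (Real.exp_pos _) (hXvol x hx)
    rw [Real.log_exp] at this
    linarith
  obtain ⟨N, hN, hNY, T, hTX, hc', hTcard⟩ := greedy_cover X cov Y0 R hR1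
    (fun s hs hne => exists_point_many (boxMu d) s cov Y0
      (fun x => measurableSet_covSet d _ _ _) (fun x hx => hsub x (hs hx)) (simpT d (U-β))
      (simpT_pos d _ hS hd) (simpT_lt_top d _) (fun x hx => hcovm x (hs hx)) R hR0 hYm hne)
    ⌈R*t⌉₊
  set f : (Fin d → ℝ) × (Fin d → ℝ) → (Fin d → ℝ) × (Fin d → ℝ) :=
    fun y => (y.2, fun i => y.2 i + Real.exp (-y.1 i)) with hf
  have hTR : (T.card : ℝ) ≤ R := by
    have hq : 0 ≤ 1 - 1/R := by
      rw [sub_nonneg, div_le_one hR0]; exact hR1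
    have h1 : (1 - 1/R)^⌈R*t⌉₊ ≤ Real.exp (-t) := by
      calc (1 - 1/R)^⌈R*t⌉₊ ≤ (Real.exp (-(1/R)))^⌈R*t⌉₊ := by
            gcongr
            have := Real.add_one_le_exp (-(1/R)); linarith
        _ = Real.exp (-(⌈R*t⌉₊ / R)) := by rw [← Real.exp_nat_mul]; ring_nf
        _ ≤ _ := by
          apply Real.exp_le_exp.2
          rw [neg_le_neg_iff, le_div_iff₀ hR0]
          have := Nat.le_ceil (R*t)
          linarith
    calc (T.card : ℝ) ≤ X.card * (1 - 1/R)^⌈R*t⌉₊ := hTcard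
      _ ≤ (R * Real.exp t) * Real.exp (-t) := by gcongr
      _ = R := by rw [mul_assoc, ← Real.exp_add]; simp
  refine ⟨N.image f ∪ T, ?_, ?_, ?_⟩
  · have h1 : ((N.image f ∪ T).card : ℝ) ≤ N.card + T.card := by
      exact_mod_cast (Finset.card_union_le _ _).trans (Nat.add_le_add_right Finset.card_image_le _)
    have h2 : (N.card : ℝ) ≤ ⌈R*t⌉₊ := by exact_mod_cast hN
    have h3 := Nat.ceil_lt_add_one (a := R*t) (by positivity)
    linarith
  · intro p hp i
    rcases Finset.mem_union.1 hp with hp | hp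
    · obtain ⟨y, hy, rfl⟩ := Finset.mem_image.1 hp
      have := (hNY y hy).1 i
      have h2 := Real.exp_pos (-y.1 i)
      exact ⟨this.1, by simp only [hf]; linarith, this.2⟩
    · have := hXval p (hTX hp) i
      exact ⟨this.1, this.2.1.le, this.2.2⟩
  · intro a b hab hvol
    obtain ⟨p, hp, hpab⟩ := hXcov a b hab hvol
    rcases hc' p hp with hpT | ⟨y, hy, hyp⟩
    · refine ⟨p, Finset.mem_union_right _ hpT, hpab, le_trans ?_ (hXvol p hp)⟩
      apply Real.exp_le_exp.2; linarith
    · refine ⟨f y, Finset.mem_union_left _ (Finset.mem_image_of_mem f hy), fun i =>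
        ⟨(hpab i).1.trans (hyp.1 i).1, ((hyp.1 i).2).trans (hpab i).2⟩, ?_⟩
      simp only [hf, add_sub_cancel_left]
      rw [← Real.exp_sum, Finset.sum_neg_distrib]
      apply Real.exp_le_exp.2
      have := hyp.2
      linarith
lemma num_K (L g : ℝ) (hL : 0 < L) (hg : 0 < g) (m : ℝ) (hm : m = min L (1/4)) :
    (1+3*m)*g*(g+1.386+L)^2 ≤ (g+L)*(1+L+g)*(g+1.386)^2 := by
  rcases le_total L (1/4) with h | h
  · rw [hm, min_eq_left h]
    nlinarith [mul_pos hL hg, mul_pos (mul_pos hL hg) hg, mul_nonneg hL.le (sub_nonneg.2 h), sq_nonneg (g-1/2), mul_nonneg hL.le (sq_nonneg (g-1/2)), mul_nonneg hL.le (sq_nonneg (g-2*L)), sq_nonneg (g*g-L), mul_nonneg (mul_nonneg hL.le (sub_nonneg.2 h)) hg.le]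
  · rw [hm, min_eq_right h]
    have : (7/4)*g*(g+1.386+L)^2 ≤ (g+L)*(1+L+g)*(g+1.386)^2 := by
      nlinarith [mul_pos hL hg, mul_pos (mul_pos hL hg) hg, mul_nonneg hL.le (sub_nonneg.2 h), sq_nonneg (g-1/2), mul_nonneg hL.le (sq_nonneg (g-1/2)), mul_nonneg hL.le (sq_nonneg (g-2*L)), sq_nonneg (g*g-L), mul_nonneg (mul_nonneg hL.le (sub_nonneg.2 h)) hg.le]
    linarith

lemma num_half_bern (d : ℕ) (hd : 2 ≤ d) (s : ℝ) (hs : -1 ≤ s) (h0 : 0 ≤ 1 + d/2*s) :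
    (1 + d/2*s)^2 ≤ (1+s)^d := by
  have hd' : (2:ℝ) ≤ d := by exact_mod_cast hd
  have h := one_add_mul_self_le_rpow_one_add hs (p := (d:ℝ)/2) (by linarith)
  calc (1 + d/2*s)^2 ≤ ((1+s)^((d:ℝ)/2))^2 := by gcongr
    _ = (1+s)^d := by
      rw [← Real.rpow_natCast, ← Real.rpow_mul (by linarith)]
      rw [← Real.rpow_natCast]; congr 1; push_cast; ring

lemma log4_bd : 1.386 ≤ Real.log 4 ∧ Real.log 4 ≤ 1.39 := by
  have : Real.log 4 = 2 * Real.log 2 := by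
    rw [show (4:ℝ) = 2^2 by norm_num, Real.log_pow]; norm_num
  have h1 := Real.log_two_gt_d9
  have h2 := Real.log_two_lt_d9
  constructor <;> linarith

lemma num_Q (d : ℕ) (hd : 2 ≤ d) (L g U : ℝ) (hL : 1/(2*d) ≤ L) (hg : 0 < g)
    (hU : U = g + Real.log 4) :
    3 * (1+L/U)^(2*d) ≤ ((1+L/g)*(1+L+g))^d := by
  have hd' : (2:ℝ) ≤ d := by exact_mod_cast hd
  have hd0 : (0:ℝ) < 1/(2*d) := by positivity
  have hL0 : 0 < L := by linarith
  have h4 := log4_bd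
  have hm : 1/(2*d) ≤ min L (1/4) := by
    apply le_min hL
    apply one_div_le_one_div_of_le <;> linarith
  set m := min L (1/4) with hmd
  have hK := num_K L g hL0 hg m hmd
  have hm0 : 0 < m := by linarith
  have h1 : (1+3*m)*(1+L/U)^2 ≤ (1+L/g)*(1+L+g) := by
    have h2 : (1+L/U) ≤ 1 + L/(g+1.386) := by
      have : g + 1.386 ≤ U := by linarith
      have : 0 < g + 1.386 := by linarith
      gcongr
    have hU0 : 0 < U := by linarith
    calc (1+3*m)*(1+L/U)^2 ≤ (1+3*m)*(1 + L/(g+1.386))^2 := by gcongr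
      _ = (1+3*m)*g*(g+1.386+L)^2 / (g*(g+1.386)^2) := by field_simp
      _ ≤ (g+L)*(1+L+g)*(g+1.386)^2 / (g*(g+1.386)^2) := by gcongr
      _ = _ := by field_simp
  have h3 : (3:ℝ) ≤ (1+3*m)^d := by
    have := num_half_bern d hd (3/(2*d)) (by have : (0:ℝ) < 3/(2*d) := by positivity
                                             linarith) (by positivity)
    have e : (d:ℝ)/2*(3/(2*d)) = 3/4 := by field_simp; norm_num
    rw [e] at this
    have h5 : (1+3/(2*d) : ℝ) ≤ 1+3*m := by
      have : (3/(2*d) : ℝ) = 3*(1/(2*d)) := by ring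
      linarith
    have h6 : (1+3/(2*d) : ℝ)^d ≤ (1+3*m)^d := by gcongr
    norm_num at this
    linarith
  have hU0 : 0 < U := by linarith
  calc 3 * (1+L/U)^(2*d) ≤ (1+3*m)^d * ((1+L/U)^2)^d := by rw [← pow_mul]; gcongr
    _ = ((1+3*m)*(1+L/U)^2)^d := by rw [mul_pow]
    _ ≤ _ := by gcongr

lemma beta_bd (d : ℕ) (hd : 2 ≤ d) (β : ℝ) (hβ : β = -Real.log (1-1/(12*d))) :
    0 ≤ β ∧ Real.exp β ≤ 24/23 ∧ 2*d*β ≤ 4/23 ∧ Real.exp (-β) = 1-1/(12*d) := by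
  have hd' : (2:ℝ) ≤ d := by exact_mod_cast hd
  have h1 : (1:ℝ)/(12*d) ≤ 1/24 := by
    apply one_div_le_one_div_of_le <;> linarith
  have h0 : (0:ℝ) < 1/(12*d) := by positivity
  have e1 : Real.exp (-β) = 1-1/(12*d) := by rw [hβ, neg_neg, Real.exp_log (by linarith)]
  have e2 : Real.exp β * (1-1/(12*d)) = 1 := by rw [← e1, ← Real.exp_add]; simp
  have h2 := Real.add_one_le_exp β
  have h3 := Real.exp_pos β
  refine ⟨?_, ?_, ?_, e1⟩
  · have := Real.log_nonpos (x := 1-1/(12*d)) (by linarith) (by linarith)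
    linarith
  · nlinarith
  · have h5 : Real.exp β ≤ 24/23 := by nlinarith
    have h6 : Real.exp β - 1 = Real.exp β * (1/(12*d)) := by linarith
    have h7 : β ≤ 24/23 * (1/(12*d)) := by
      calc β ≤ Real.exp β * (1/(12*d)) := by linarith
        _ ≤ _ := by gcongr
    calc 2*d*β ≤ 2*d*(24/23 * (1/(12*d))) := by gcongr
      _ = 4/23 := by field_simp; norm_num

lemma num_R (d : ℕ) (hd : 2 ≤ d) (L g U β R : ℝ) (hL : 1/(2*d) ≤ L) (hg : 0 < g)
    (hU : U = g + Real.log 4) (hβ : β = -Real.log (1-1/(12*d)))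
    (hR : R = Real.exp (L+β) * ((L+U)/(U-β))^(2*d)) :
    R ≤ 0.4 * (Real.exp L * ((1+L/g)*(1+L+g))^d) := by
  have hd' : (2:ℝ) ≤ d := by exact_mod_cast hd
  have hd0 : (0:ℝ) < 1/(2*d) := by positivity
  have hL0 : 0 < L := by linarith
  have h4 := log4_bd
  obtain ⟨b0, b1, b2, -⟩ := beta_bd d hd β hβ
  have hQ := num_Q d hd L g U hL hg hU
  have hU0 : 1.386 ≤ U := by linarith
  have hβs : β ≤ 1/23 := by nlinarith
  have hUp : 0 < U := by linarith
  have hUβ : 0 < U - β := by linarith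
  have e : (L+U)/(U-β) = (1+L/U) / (1-β/U) := by
    have : 1 - β/U = (U-β)/U := by field_simp
    rw [this]; field_simp; ring
  have h5 : 0.87 ≤ (1-β/U)^(2*d) := by
    have hbu : β/U ≤ 1 := by rw [div_le_one hUp]; linarith
    have := one_add_mul_le_pow (a := -(β/U)) (by linarith) (2*d)
    have h6 : 2*d*(β/U) ≤ 0.13 := by
      rw [← mul_div_assoc, div_le_iff₀ hUp]; linarith
    rw [← sub_eq_add_neg] at this
    push_cast at this
    linarith
  have h6 : Real.exp β * ((L+U)/(U-β))^(2*d) ≤ 1.2 * (1+L/U)^(2*d) := by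
    rw [e, div_pow, ← mul_div_assoc, div_le_iff₀ (by linarith)]
    have : 0 < (1+L/U)^(2*d) := by positivity
    nlinarith
  rw [hR, Real.exp_add]
  have := mul_le_mul_of_nonneg_left (h6.trans (by linarith : _ ≤ 0.4 * ((1+L/g)*(1+L+g))^d))
    (Real.exp_pos L).le
  linarith

lemma num_final (d : ℕ) (hd : 2 ≤ d) (L g U β R t : ℝ) (hL : 1/(2*d) ≤ L) (hg : 0 < g)
    (hU : U = g + Real.log 4) (hβ : β = -Real.log (1-1/(12*d)))
    (hR : R = Real.exp (L+β) * ((L+U)/(U-β))^(2*d)) (ht : t = 2*d*(17/4 + Real.log d + g)) :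
    R * (t+1) + 1 ≤ 7 * d * Real.log d * ((1+L/g)*(1+L+g))^d * Real.exp (L+g) := by
  have hd' : (2:ℝ) ≤ d := by exact_mod_cast hd
  have hd0 : (0:ℝ) < 1/(2*d) := by positivity
  have hL0 : 0 < L := by linarith
  have h4 := log4_bd
  have hRb := num_R d hd L g U β R hL hg hU hβ hR
  have hQ := num_Q d hd L g U hL hg hU
  have hUp : 0 < U := by linarith
  set Q := ((1+L/g)*(1+L+g))^d with hQd
  have hQ3 : 3 ≤ Q := by
    have : (1:ℝ) ≤ (1+L/U)^(2*d) := one_le_pow₀ (by have : 0 < L/U := by positivity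
                                                    linarith)
    linarith
  have hl2 : 0.693 ≤ Real.log d := by
    have := Real.log_two_gt_d9
    have := Real.log_le_log (by norm_num) hd'
    linarith
  have heg := Real.add_one_le_exp g
  have hlE : 1 ≤ Real.exp L := Real.one_le_exp hL0.le
  have ht1 : t + 1 ≤ (2*d*(17/4 + Real.log d)+1) * Real.exp g := by
    have : 2*d*g ≤ (2*d*(17/4 + Real.log d)+1) * g := by
      gcongr
      nlinarith
    have : (2*d*(17/4 + Real.log d)+1) * (g+1) ≤ (2*d*(17/4 + Real.log d)+1) * Real.exp g := by
      gcongr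
    rw [ht]; linarith
  have ht0 : 0 ≤ t + 1 := by
    rw [ht]; positivity
  rw [Real.exp_add]
  set P := Real.exp L * Q with hP
  have hP3 : 3 ≤ P := by nlinarith
  have hPg : 1 ≤ 0.4 * (P * Real.exp g) := by nlinarith
  have h1 : R*(t+1) ≤ (0.4*P) * ((2*d*(17/4 + Real.log d)+1) * Real.exp g) := by
    gcongr
  have h2 : 0.4*(2*d*(17/4 + Real.log d)+2) ≤ 7 * d * Real.log d := by nlinarith
  have h3 : 0 ≤ P * Real.exp g := by positivity
  have h4 := mul_le_mul_of_nonneg_right h2 h3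
  have : 7 * d * Real.log d * Q * (Real.exp L * Real.exp g) =
    7 * d * Real.log d * (P * Real.exp g) := by rw [hP]; ring
  rw [this]
  linarith

lemma exp_bds : Real.exp 1 ≤ 2.7183 ∧ 67 ≤ Real.exp (17/4) := by
  have h1 := Real.exp_one_gt_d9
  have h2 := Real.exp_one_lt_d9
  refine ⟨by linarith, ?_⟩
  have e : Real.exp (17/4) = (Real.exp 1)^4 * Real.exp (1/4) := by
    rw [← Real.exp_nat_mul, ← Real.exp_add]; norm_num
  have h3 := Real.add_one_le_exp (1/4:ℝ)
  have h4 : (2.718:ℝ)^4 ≤ (Real.exp 1)^4 := by gcongr; linarith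
  rw [e]
  calc (67:ℝ) ≤ 2.718^4 * (1/4+1) := by norm_num
    _ ≤ _ := by gcongr

lemma num_X (d : ℕ) (hd : 2 ≤ d) (L g U β R t σ η : ℝ) (hL : 0 < L) (hg : 0 < g)
    (hU : U = g + Real.log 4) (hβ : 0 ≤ β) (hβU : β < U) (hη : η = 1/(24*d^2))
    (hσ : σ = Real.log (1+η))
    (hR : R = Real.exp (L+β) * ((L+U)/(U-β))^(2*d)) (ht : t = 2*d*(17/4 + Real.log d + g)) :
    Real.exp L * Real.exp (2*d) * (2 * (1 + L/(2*d*σ))^2)^d ≤ R * Real.exp t := by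
  have hd' : (2:ℝ) ≤ d := by exact_mod_cast hd
  have hdp : (0:ℝ) < d := by linarith
  have h4 := log4_bd
  have hUp : 0 < U := by linarith
  obtain ⟨e1, e2⟩ := exp_bds
  have hη0 : 0 < η := by rw [hη]; positivity
  have hσl : 1/(24*d^2+1) ≤ σ := by
    have := Real.one_sub_inv_le_log_of_pos (x := 1+η) (by linarith)
    rw [← hσ] at this
    have e : 1 - (1+η)⁻¹ = 1/(24*(d:ℝ)^2+1) := by rw [hη]; field_simp; ring
    linarith
  have hσ0 : 0 < σ := lt_of_lt_of_le (by positivity) hσl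
  have hy : L/(2*d*σ) ≤ 12.125*d*L := by
    rw [div_le_iff₀ (by positivity)]
    have h1 : 1 ≤ 24.25*(d:ℝ)^2*σ := by
      calc (1:ℝ) ≤ 24.25*(d:ℝ)^2*(1/(24*d^2+1)) := by
            rw [mul_one_div, le_div_iff₀ (by positivity)]; nlinarith
        _ ≤ _ := by gcongr
    nlinarith
  have hEg : 1 + L/1.39 ≤ (1+L/U) * Real.exp g := by
    have h1 := Real.add_one_le_exp g
    calc 1 + L/1.39 ≤ (1+L/(g+1.39)) * (g+1) := by
          have : L/1.39 ≤ L/(g+1.39)*(g+1) := by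
            rw [div_mul_eq_mul_div, div_le_div_iff₀ (by norm_num) (by linarith)]
            nlinarith [mul_pos hL hg]
          linarith
      _ ≤ _ := by
        gcongr
        linarith
  have hmain : 1.42 * Real.exp 1 * (1 + L/(2*d*σ)) ≤
      (1+L/U) * (Real.exp (17/4) * d * Real.exp g) := by
    calc 1.42 * Real.exp 1 * (1 + L/(2*d*σ)) ≤ 1.42 * 2.7183 * (1 + 12.125*d*L) := by gcongr
      _ ≤ 67 * d * (1 + 0.719 * L) := by nlinarith [mul_pos hdp hL]
      _ ≤ 67 * d * (1 + L/1.39) := by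
        have : 0.719 * L ≤ L/1.39 := by rw [le_div_iff₀ (by norm_num)]; linarith
        gcongr
      _ ≤ Real.exp (17/4) * d * ((1+L/U) * Real.exp g) := by gcongr
      _ = _ := by ring
  have hsq : Real.exp 2 * (2 * (1 + L/(2*d*σ))^2) ≤
      (1+L/U)^2 * (Real.exp (17/4) * d * Real.exp g)^2 := by
    rw [← mul_pow]
    calc Real.exp 2 * (2 * (1 + L/(2*d*σ))^2) = (Real.exp 1)^2 * (2 * (1 + L/(2*d*σ))^2) := by
          rw [← Real.exp_nat_mul]; norm_num
      _ ≤ (Real.exp 1)^2 * (1.42^2 * (1 + L/(2*d*σ))^2) := by gcongr; norm_num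
      _ = (1.42 * Real.exp 1 * (1 + L/(2*d*σ)))^2 := by ring
      _ ≤ _ := by gcongr
  have hUβ : 0 < U - β := by linarith
  have hRl : Real.exp L * ((1+L/U)^2)^d ≤ R := by
    rw [hR, ← pow_mul]
    gcongr
    · linarith
    · have : 1 + L/U = (L+U)/U := by field_simp; ring
      rw [this]
      gcongr
      linarith
  have hte : Real.exp t = ((Real.exp (17/4) * d * Real.exp g)^2)^d := by
    have : Real.exp (17/4) * d * Real.exp g = Real.exp (17/4 + Real.log d + g) := by
      rw [Real.exp_add, Real.exp_add, Real.exp_log hdp]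
    rw [← pow_mul, this, ← Real.exp_nat_mul, ht]
    push_cast
    rfl
  calc Real.exp L * Real.exp (2*d) * (2 * (1 + L/(2*d*σ))^2)^d
      = Real.exp L * (Real.exp 2 * (2 * (1 + L/(2*d*σ))^2))^d := by
        rw [mul_pow (Real.exp 2), ← Real.exp_nat_mul, mul_comm (d:ℝ) 2]; ring
    _ ≤ Real.exp L * ((1+L/U)^2 * (Real.exp (17/4) * d * Real.exp g)^2)^d := by gcongr
    _ = Real.exp L * ((1+L/U)^2)^d * Real.exp t := by rw [mul_pow, hte]; ring
    _ ≤ _ := by gcongr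
lemma case_main (d : ℕ) (hd : 2 ≤ d) (L g : ℝ) (hL : 1/(2*d) ≤ L) (hg : 0 < g) :
    ∃ 𝒩 : Finset ((Fin d → ℝ) × (Fin d → ℝ)), (𝒩.card : ℝ) ≤
        7 * d * Real.log d * ((1+L/g)*(1+L+g))^d * Real.exp (L+g) ∧
      (∀ p ∈ 𝒩, ∀ i, 0 ≤ p.1 i ∧ p.1 i ≤ p.2 i ∧ p.2 i ≤ 1) ∧
      ∀ a b : Fin d → ℝ, (∀ i, 0 ≤ a i ∧ a i < b i ∧ b i ≤ 1) →
        Real.exp (-L) ≤ ∏ i, (b i - a i) →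
        ∃ p ∈ 𝒩, (∀ i, a i ≤ p.1 i ∧ p.2 i ≤ b i) ∧
          Real.exp (-(L+(g + Real.log 4))) ≤ ∏ i, (p.2 i - p.1 i) := by
  have hd' : (2:ℝ) ≤ d := by exact_mod_cast hd
  have hd0 : (0:ℝ) < 1/(2*d) := by positivity
  have hL0 : 0 < L := by linarith
  have h4 := log4_bd
  obtain ⟨b0, b1, b2, b3⟩ := beta_bd d hd _ rfl
  set β : ℝ := -Real.log (1-1/(12*d)) with hβ
  set U := g + Real.log 4 with hU
  have hβs : β ≤ 1/23 := by nlinarith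
  have hβU : β < U := by linarith
  have hη0 : (0:ℝ) < 1/(24*d^2) := by positivity
  have hη1 : (1:ℝ)/(24*d^2) < 1 := by
    rw [div_lt_one (by positivity)]; nlinarith
  set η : ℝ := 1/(24*d^2) with hη
  obtain ⟨X, hXc, hXval, hXvol, hXcov⟩ := grid_exists d (by omega) η L (Real.log (1+η)) hη0 hη1 hL0 rfl
  have hl0 : 0 ≤ Real.log d := Real.log_nonneg (by linarith)
  obtain ⟨N, hN, hNval, hNcov⟩ := combine_cover d (by omega) L U β (2*d*(17/4 + Real.log d + g)) _ hL0 b0 hβU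
    (by positivity) rfl X hXval (by
      intro p hp
      refine le_trans ?_ (hXvol p hp)
      rw [neg_add, Real.exp_add, b3]
      have h1 : 1 - 2*η ≤ (1-η)/(1+η) := by
        rw [le_div_iff₀ (by linarith)]; nlinarith
      have h2 : 2*η ≤ 1 := by
        rw [hη, mul_one_div, div_le_one (by positivity)]; nlinarith
      have h3 := one_add_mul_le_pow (a := -(2*η)) (by linarith) d
      have h5 : 1 + d * (-(2*η)) = 1 - 1/(12*d) := by
        rw [hη]; field_simp; ring
      rw [h5, ← sub_eq_add_neg] at h3
      gcongr
      refine h3.trans ?_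
      gcongr) hXcov
    (hXc.trans (num_X d hd L g U β _ _ _ η hL0 hg rfl b0 hβU hη rfl rfl rfl))
  exact ⟨N, hN.trans (num_final d hd L g U β _ _ hL hg rfl hβ rfl rfl), hNval, hNcov⟩

open Finset in
/-- There is a `δ`-approximation (with `δ = ε^{1+γ}/4`) for the family of
axis-parallel boxes in `[0,1]^d` of volume at least `ε`, of cardinality at most
`7 d ln d (1 + 1/γ)^d (ln(e/ε^{1+γ}))^d / ε^{1+γ}`. -/
theorem stmt_9 (d : ℕ) (hd : 2 ≤ d) (ε γ δ : ℝ) (hε : ε ∈ Set.Ioo (0:ℝ) 1)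
    (hγ : 0 < γ) (hδ : δ = ε ^ ((1:ℝ) + γ) / 4) :
    ∃ 𝒩 : Finset ((Fin d → ℝ) × (Fin d → ℝ)),
      (𝒩.card : ℝ) ≤ 7 * d * Real.log d * (1 + 1/γ) ^ d *
          (Real.log (Real.exp 1 / ε ^ ((1:ℝ) + γ))) ^ d / ε ^ ((1:ℝ) + γ) ∧
      (∀ p ∈ 𝒩, ∀ i, 0 ≤ p.1 i ∧ p.1 i ≤ p.2 i ∧ p.2 i ≤ 1) ∧
      ∀ a b : Fin d → ℝ, (∀ i, 0 ≤ a i ∧ a i ≤ b i ∧ b i ≤ 1) →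
        ε ≤ ∏ i, (b i - a i) →
        ∃ p ∈ 𝒩, (∀ i, a i ≤ p.1 i ∧ p.2 i ≤ b i) ∧ δ ≤ ∏ i, (p.2 i - p.1 i) := by
  obtain ⟨hε0, hε1⟩ := hε
  have hd' : (2:ℝ) ≤ d := by exact_mod_cast hd
  set L : ℝ := -Real.log ε with hLd
  have hL0 : 0 < L := by
    have := Real.log_neg hε0 hε1
    linarith
  have hεL : ε = Real.exp (-L) := by rw [hLd, neg_neg, Real.exp_log hε0]
  set g : ℝ := γ * L with hgd
  have hg : 0 < g := mul_pos hγ hL0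
  have hpow : ε ^ ((1:ℝ) + γ) = Real.exp (-(L+g)) := by
    rw [hεL, ← Real.exp_mul]; congr 1; rw [hgd]; ring
  have hlog : Real.log (Real.exp 1 / ε ^ ((1:ℝ) + γ)) = 1 + L + g := by
    rw [hpow, ← Real.exp_sub, Real.log_exp]; ring
  have hγ' : 1/γ = L/g := by rw [hgd]; field_simp
  have htar : 7 * d * Real.log d * (1 + 1/γ) ^ d *
          (Real.log (Real.exp 1 / ε ^ ((1:ℝ) + γ))) ^ d / ε ^ ((1:ℝ) + γ) =
      7 * d * Real.log d * ((1+L/g)*(1+L+g))^d * Real.exp (L+g) := by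
    rw [hlog, hpow, hγ', mul_pow, Real.exp_neg, div_inv_eq_mul]; ring
  have hδ' : δ = Real.exp (-(L+(g + Real.log 4))) := by
    rw [hδ, hpow, show -(L+(g + Real.log 4)) = -(L+g) - Real.log 4 by ring, Real.exp_sub,
      Real.exp_log (by norm_num)]
  rw [htar]
  -- side lengths are at least ε
  have hside : ∀ a b : Fin d → ℝ, (∀ i, 0 ≤ a i ∧ a i ≤ b i ∧ b i ≤ 1) →
        ε ≤ ∏ i, (b i - a i) → ∀ i, ε ≤ b i - a i := by
    intro a b hab hv i
    refine hv.trans ?_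
    rw [← Finset.mul_prod_erase _ _ (Finset.mem_univ i)]
    have h1 : ∏ j ∈ Finset.univ.erase i, (b j - a j) ≤ 1 := by
      apply Finset.prod_le_one
      · intro j _; linarith [(hab j).2.1]
      · intro j _; linarith [(hab j).1, (hab j).2.2]
    have := (hab i).2.1
    nlinarith
  rcases le_total ((1:ℝ)/(2*d)) L with hL | hL
  · obtain ⟨N, h1, h2, h3⟩ := case_main d hd L g hL hg
    refine ⟨N, h1, h2, fun a b hab hv => ?_⟩
    rw [hδ']
    refine h3 a b (fun i => ⟨(hab i).1, ?_, (hab i).2.2⟩) (by rw [← hεL]; exact hv)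
    have := hside a b hab hv i
    linarith
  · have hεl : 1 - 1/(2*d) ≤ ε := by
      have := Real.add_one_le_exp (-L)
      rw [← hεL] at this
      linarith
    have hd1 : (1:ℝ)/(2*d) ≤ 1/4 := by
      apply one_div_le_one_div_of_le <;> linarith
    refine ⟨{(fun _ => 1 - ε, fun _ => ε)}, ?_, ?_, ?_⟩
    · have hl2 : 0.693 ≤ Real.log d := by
        have := Real.log_two_gt_d9
        have := Real.log_le_log (by norm_num) hd'
        linarith
      have h1 : 1 ≤ ((1+L/g)*(1+L+g))^d := by
        apply one_le_pow₀
        apply one_le_mul_of_one_le_of_one_le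
        · have : 0 < L/g := by positivity
          linarith
        · linarith
      have h2 : 1 ≤ Real.exp (L+g) := Real.one_le_exp (by linarith)
      have h3 : 1 ≤ 7 * d * Real.log d := by nlinarith
      have := one_le_mul_of_one_le_of_one_le (one_le_mul_of_one_le_of_one_le h3 h1) h2
      simpa using this
    · intro p hp i
      rw [Finset.mem_singleton] at hp
      subst hp
      exact ⟨by dsimp only; linarith, by dsimp only; linarith, hε1.le⟩
    · intro a b hab hv
      refine ⟨_, Finset.mem_singleton_self _, fun i => ?_, ?_⟩
      · have := hside a b hab hv i
        have h2 := hab i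
        constructor
        · dsimp only; linarith
        · dsimp only; linarith
      · simp only [Finset.prod_const, Finset.card_univ, Fintype.card_fin]
        have h1 := num_half_bern d hd (-(1/d)) (by
          have : (1:ℝ)/d ≤ 1 := by rw [div_le_one (by linarith)]; linarith
          linarith) (by
          have : (d:ℝ)/2 * (-(1/d)) = -(1/2) := by field_simp
          rw [this]; norm_num)
        have e : (d:ℝ)/2 * (-(1/d)) = -(1/2) := by field_simp
        rw [e] at h1
        have h2 : δ ≤ 1/4 := by
          rw [hδ, hpow]
          have := Real.exp_le_one_iff.2 (by linarith : -(L+g) ≤ 0)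
          linarith
        have h3 : (1 + -(1/d) : ℝ)^d ≤ (ε - (1-ε))^d := by
          have h5 : (1:ℝ)/(2*d) = (1/d)/2 := by field_simp
          have : (1:ℝ)/d ≤ 1 := by rw [div_le_one (by linarith)]; linarith
          apply pow_le_pow_left₀ <;> linarith
        norm_num at h1
        norm_num at h3
        linarith
end

section
/- Let d ≥ 1, k ≥ 1, ε, δ ∈ (0,1), and let 𝒩 be a δ-approximation for the family of axis-parallel boxes of volume at least ε in [0,1]^d with |𝒩| ≥ 3. Then N_k(ε,d) ≤ (5/δ)(ln|𝒩| + k ln(e/δ)). Moreover N = ⌊5 ln|𝒩|/δ + 5k ln(e/δ)/δ⌋ independent uniform random points in [0,1]^d satisfy, with probability at least 1 - 1/|𝒩|, that every box in 𝒩 of volume ≥ δ contains at least k+1 of the points. -/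
open MeasureTheory Finset

lemma inj_ae {α : Type*} [MeasurableSpace α] [MeasurableSingletonClass α] [MeasurableEq α] (μ : Measure α)
    [IsProbabilityMeasure μ] [NullSingletonClass μ] (N : ℕ) :
    ∀ᵐ ω ∂(Measure.pi fun _ : Fin N => μ), Function.Injective ω := by
  have key : ∀ i j : Fin N, i ≠ j → ∀ᵐ ω ∂(Measure.pi fun _ : Fin N => μ), ω i ≠ ω j := by
    intro i j hij
    obtain _ | n := N
    · exact i.elim0
    obtain ⟨l, rfl⟩ := Fin.exists_succAbove_eq hij.symm
    have mp := measurePreserving_piFinSuccAbove (fun _ : Fin (n+1) => μ) i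
    have hs : MeasurableSet {q : α × (Fin n → α) | q.1 = q.2 l} :=
      measurableSet_eq_fun (by fun_prop) (by fun_prop)
    have h0 : (μ.prod (Measure.pi fun _ : Fin n => μ)) {q : α × (Fin n → α) | q.1 = q.2 l} = 0 := by
      rw [Measure.prod_apply_symm hs]
      refine (lintegral_congr fun y => ?_).trans lintegral_zero
      have : ((fun x => (x, y)) ⁻¹' {q : α × (Fin n → α) | q.1 = q.2 l}) = {y l} := by
        ext x; simp
      rw [this]; simp
    rw [← mp.measure_preimage hs.nullMeasurableSet] at h0
    rw [ae_iff]
    convert h0 using 2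
    ext ω
    simp only [ne_eq, not_not]
    exact Iff.rfl
  have h2 : ∀ᵐ ω ∂(Measure.pi fun _ : Fin N => μ), ∀ i j : Fin N, i ≠ j → ω i ≠ ω j := by
    rw [ae_all_iff]; intro i
    rw [ae_all_iff]; intro j
    by_cases hij : i = j
    · simp [hij]
    · filter_upwards [key i j hij] with ω h _ using h
  filter_upwards [h2] with ω h i j hij
  by_contra hne
  exact h i j hne hij

lemma tail {α : Type*} [MeasurableSpace α] (μ : Measure α)
    [IsProbabilityMeasure μ] (N k : ℕ) (B : Set α) (hB : MeasurableSet B) :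
    (Measure.pi fun _ : Fin N => μ).real {ω | ({j : Fin N | ω j ∈ B}).ncard ≤ k} ≤
      2 ^ k * (1 - μ.real B / 2) ^ N := by
  classical
  set f : α → ℝ := fun x => 1 - B.indicator (fun _ => (1/2 : ℝ)) x with hf
  have hint : Integrable (B.indicator (fun _ => (1/2 : ℝ))) μ :=
    (integrable_const _).indicator hB
  have hfi : Integrable f μ := (integrable_const _).sub hint
  have hf1 : ∫ x, f x ∂μ = 1 - μ.real B / 2 := by
    rw [hf, integral_sub (integrable_const _) hint, integral_indicator_const _ hB]
    simp; ring
  have hprod : ∫ ω : Fin N → α, ∏ j, f (ω j) ∂(Measure.pi fun _ : Fin N => μ)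
      = (1 - μ.real B / 2) ^ N := by
    rw [integral_fintype_prod_eq_prod (𝕜 := ℝ) (μ := fun _ : Fin N => μ) (fun _ => f)]
    simp [hf1]
  have hval : ∀ ω : Fin N → α, ∏ j, f (ω j) = (1/2:ℝ) ^ ({j : Fin N | ω j ∈ B}).ncard := by
    intro ω
    have : ∀ j, f (ω j) = if ω j ∈ B then (1/2:ℝ) else 1 := by
      intro j
      simp only [hf, Set.indicator]
      split_ifs <;> norm_num
    simp_rw [this]
    rw [Finset.prod_ite]
    simp [Set.ncard_eq_toFinset_card']
  have hmk := mul_meas_ge_le_integral_of_nonneg (μ := Measure.pi fun _ : Fin N => μ)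
    (f := fun ω => ∏ j, f (ω j)) (Filter.Eventually.of_forall fun ω => by
      simp only [hval]; positivity)
    (Integrable.fintype_prod (μ := fun _ : Fin N => μ) (f := fun _ => f) fun _ => hfi) ((1/2:ℝ)^k)
  rw [hprod] at hmk
  have hsub : {ω : Fin N → α | ({j : Fin N | ω j ∈ B}).ncard ≤ k} ⊆
      {ω | (1/2:ℝ)^k ≤ ∏ j, f (ω j)} := by
    intro ω h
    simp only [Set.mem_ofPred_eq, hval] at h ⊢
    exact pow_le_pow_of_le_one (by norm_num) (by norm_num) h
  have h1 := measureReal_mono (μ := Measure.pi fun _ : Fin N => μ) hsub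
  calc _ ≤ _ := h1
    _ = 2^k * ((1/2:ℝ)^k * (Measure.pi fun _ : Fin N => μ).real {ω | (1/2:ℝ)^k ≤ ∏ j, f (ω j)}) := by
      rw [← mul_assoc, ← mul_pow]; norm_num
    _ ≤ _ := by gcongr

lemma numeric (n k N : ℕ) (hk : 1 ≤ k) (hn : 3 ≤ n) (δ v : ℝ) (h0 : 0 < δ) (h1 : δ < 1) (hv : δ ≤ v)
    (hv1 : v ≤ 1)
    (hN : N = ⌊5 * Real.log n / δ + 5 * k * Real.log (Real.exp 1 / δ) / δ⌋₊) :
    (2:ℝ) ^ k * (1 - v / 2) ^ N ≤ 1 / (n:ℝ)^2 := by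
  have hn0 : (0:ℝ) < n := by positivity
  have hL : 1 ≤ Real.log n := by
    rw [Real.le_log_iff_exp_le hn0]
    have := Real.exp_one_lt_d9
    have : (3:ℝ) ≤ n := by exact_mod_cast hn
    linarith
  have hk' : (1:ℝ) ≤ k := by exact_mod_cast hk
  have ht : 1 ≤ Real.log (Real.exp 1 / δ) := by
    rw [Real.log_div (Real.exp_pos 1).ne' h0.ne', Real.log_exp]
    have := Real.log_neg h0 h1
    linarith
  have hfl := Nat.lt_floor_add_one (5 * Real.log n / δ + 5 * k * Real.log (Real.exp 1 / δ) / δ)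
  rw [← hN] at hfl
  have hNδ : 5 * Real.log n + 5 * k - 1 ≤ N * δ := by
    rw [← add_div, div_lt_iff₀ h0] at hfl
    nlinarith
  have hl2 : Real.log 2 < 1 := by have := Real.log_two_lt_d9; linarith
  have e1 : (2:ℝ)^k = Real.exp (k * Real.log 2) := by
    rw [mul_comm, Real.exp_mul, Real.exp_log (by norm_num), Real.rpow_natCast]
  have e2 : (1 - v/2)^N ≤ Real.exp (N * (-(v/2))) := by
    rw [Real.exp_nat_mul]
    exact pow_le_pow_left₀ (by linarith) (by have := Real.add_one_le_exp (-(v/2)); linarith) _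
  have e3 : 1 / (n:ℝ)^2 = Real.exp (-(2 * Real.log n)) := by
    rw [Real.exp_neg, show 2 * Real.log (n:ℝ) = Real.log ((n:ℝ)^2) by simp, Real.exp_log (by positivity), one_div]
  calc _ ≤ Real.exp (k * Real.log 2) * Real.exp (N * (-(v/2))) := by rw [e1]; gcongr
    _ = Real.exp (k * Real.log 2 + N * (-(v/2))) := by rw [Real.exp_add]
    _ ≤ _ := by
      rw [e3]
      apply Real.exp_le_exp.2
      have : (N:ℝ) * δ ≤ N * v := by gcongr
      nlinarith

theorem stmt_11 (d k : ℕ) (hd : 1 ≤ d) (hk : 1 ≤ k) (ε δ : ℝ)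
    (hε : ε ∈ Set.Ioo (0:ℝ) 1) (hδ : δ ∈ Set.Ioo (0:ℝ) 1)
    (𝒩 : Finset ((Fin d → ℝ) × (Fin d → ℝ)))
    (h𝒩box : ∀ p ∈ 𝒩, ∀ i, 0 ≤ p.1 i ∧ p.1 i ≤ p.2 i ∧ p.2 i ≤ 1)
    (h𝒩card : 3 ≤ 𝒩.card)
    (happrox : ∀ a b : Fin d → ℝ, (∀ i, 0 ≤ a i ∧ a i ≤ b i ∧ b i ≤ 1) →
      ε ≤ ∏ i, (b i - a i) →
      ∃ p ∈ 𝒩, (∀ i, a i ≤ p.1 i ∧ p.2 i ≤ b i) ∧ δ ≤ ∏ i, (p.2 i - p.1 i))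
    (N : ℕ)
    (hN : N = ⌊5 * Real.log 𝒩.card / δ + 5 * k * Real.log (Real.exp 1 / δ) / δ⌋₊) :
    (1 - 1 / (𝒩.card : ℝ) ≤
      ((Measure.pi fun _ : Fin N =>
          (volume : Measure (Fin d → ℝ)).restrict (Set.univ.pi fun _ => Set.Icc (0:ℝ) 1))
        {ω : Fin N → (Fin d → ℝ) |
          ∀ p ∈ 𝒩, δ ≤ ∏ i, (p.2 i - p.1 i) →
            k + 1 ≤ ({j : Fin N | ω j ∈ Set.univ.pi fun i =>
              Set.Ico (p.1 i) (p.2 i)}).ncard}).toReal) ∧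
    ∃ P : Finset (Fin d → ℝ),
      (P : Set (Fin d → ℝ)) ⊆ (Set.univ.pi fun _ => Set.Icc (0:ℝ) 1) ∧
      (P.card : ℝ) ≤ (5 / δ) * (Real.log 𝒩.card + k * Real.log (Real.exp 1 / δ)) ∧
      ∀ a b : Fin d → ℝ, (∀ i, 0 ≤ a i ∧ a i ≤ b i ∧ b i ≤ 1) →
        ε < ∏ i, (b i - a i) →
        k + 1 ≤ ({x ∈ (P : Set (Fin d → ℝ)) |
          x ∈ Set.univ.pi fun i => Set.Ico (a i) (b i)}).ncard := by
  classical
  obtain ⟨hδ0, hδ1⟩ := hδ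
  set C : Set (Fin d → ℝ) := Set.univ.pi fun _ => Set.Icc (0:ℝ) 1 with hC
  have hCm : MeasurableSet C := MeasurableSet.univ_pi fun _ => measurableSet_Icc
  set μ : Measure (Fin d → ℝ) := volume.restrict C with hμ
  have hprob : IsProbabilityMeasure μ := ⟨by
    rw [hμ, Measure.restrict_apply_univ, hC, volume_pi_pi]; simp⟩
  have : Nonempty (Fin d) := ⟨⟨0, hd⟩⟩
  have : NullSingletonClass μ := by rw [hμ]; infer_instance
  set G : Set (Fin N → (Fin d → ℝ)) := {ω | ∀ p ∈ 𝒩, δ ≤ ∏ i, (p.2 i - p.1 i) →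
            k + 1 ≤ ({j : Fin N | ω j ∈ Set.univ.pi fun i =>
              Set.Ico (p.1 i) (p.2 i)}).ncard} with hG
  set ν := Measure.pi fun _ : Fin N => μ with hν
  have hn0 : (0:ℝ) < 𝒩.card := by have : 0 < 𝒩.card := by omega
                                  exact_mod_cast this
  have hbox : ∀ p ∈ 𝒩, δ ≤ ∏ i, (p.2 i - p.1 i) →
      ν.real {ω | ({j : Fin N | ω j ∈ Set.univ.pi fun i =>
              Set.Ico (p.1 i) (p.2 i)}).ncard ≤ k} ≤ 1 / (𝒩.card:ℝ)^2 := by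
    intro p hp hv
    have hB : MeasurableSet (Set.univ.pi fun i => Set.Ico (p.1 i) (p.2 i)) :=
      MeasurableSet.univ_pi fun _ => measurableSet_Ico
    have hBC : (Set.univ.pi fun i => Set.Ico (p.1 i) (p.2 i)) ⊆ C := by
      refine Set.pi_mono fun i _ => ?_
      obtain ⟨h1, h2, h3⟩ := h𝒩box p hp i
      exact fun x hx => ⟨h1.trans hx.1, hx.2.le.trans h3⟩
    have hvol : μ.real (Set.univ.pi fun i => Set.Ico (p.1 i) (p.2 i)) = ∏ i, (p.2 i - p.1 i) := by
      rw [measureReal_def, hμ, Measure.restrict_apply hB, Set.inter_eq_left.2 hBC,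
        Real.volume_pi_Ico_toReal]
      exact fun i => (h𝒩box p hp i).2.1
    refine (tail μ N k _ hB).trans ?_
    exact numeric _ k N hk h𝒩card δ _ hδ0 hδ1 (hvol ▸ hv) measureReal_le_one hN
  have hbad : ν.real Gᶜ ≤ 1 / (𝒩.card:ℝ) := by
    have hsub : Gᶜ ⊆ ⋃ p ∈ 𝒩.filter (fun p => δ ≤ ∏ i, (p.2 i - p.1 i)),
        {ω : Fin N → (Fin d → ℝ) | ({j : Fin N | ω j ∈ Set.univ.pi fun i =>
              Set.Ico (p.1 i) (p.2 i)}).ncard ≤ k} := by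
      intro ω h
      simp only [hG, Set.mem_compl_iff, Set.mem_ofPred_eq, not_forall, not_le] at h
      obtain ⟨p, hp, hv, hlt⟩ := h
      simp only [Set.mem_iUnion]
      exact ⟨p, Finset.mem_filter.2 ⟨hp, hv⟩, Nat.lt_succ_iff.1 hlt⟩
    calc ν.real Gᶜ ≤ _ := measureReal_mono hsub (measure_ne_top _ _)
      _ ≤ ∑ p ∈ 𝒩.filter (fun p => δ ≤ ∏ i, (p.2 i - p.1 i)), _ := measureReal_biUnion_finset_le _ _
      _ ≤ ∑ p ∈ 𝒩.filter (fun p => δ ≤ ∏ i, (p.2 i - p.1 i)), 1 / (𝒩.card:ℝ)^2 := by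
        refine Finset.sum_le_sum fun p hp => ?_
        rw [Finset.mem_filter] at hp
        exact hbox p hp.1 hp.2
      _ ≤ ∑ p ∈ 𝒩, 1 / (𝒩.card:ℝ)^2 :=
        Finset.sum_le_sum_of_subset_of_nonneg (Finset.filter_subset _ _) fun _ _ _ => by positivity
      _ = 1 / (𝒩.card:ℝ) := by
        rw [Finset.sum_const, nsmul_eq_mul]; field_simp
  have hmain : 1 - 1 / (𝒩.card:ℝ) ≤ ν.real G := by
    have h1 := measureReal_union_le (μ := ν) G Gᶜ
    rw [Set.union_compl_self] at h1
    have : ν.real Set.univ = 1 := by simp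
    linarith
  refine ⟨hmain, ?_⟩
  have hpos : ν G ≠ 0 := by
    intro h
    have : ν.real G = 0 := by rw [measureReal_def, h]; rfl
    have h3 : 1 / (𝒩.card:ℝ) < 1 := by
      rw [div_lt_one hn0]
      have : 1 < 𝒩.card := by omega
      exact_mod_cast this
    linarith
  have hinj := inj_ae μ N
  have hin : ∀ᵐ ω ∂ν, ∀ j, ω j ∈ C := by
    rw [ae_all_iff]; intro j
    have : ∀ᵐ x ∂μ, x ∈ C := ae_restrict_mem hCm
    exact (Measure.tendsto_eval_ae_ae (μ := fun _ : Fin N => μ) (i := j)).eventually this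
  obtain ⟨ω, hωG, hωi, hωC⟩ : ∃ ω ∈ G, Function.Injective ω ∧ ∀ j, ω j ∈ C := by
    by_contra hcon
    push Not at hcon
    apply hpos
    refine measure_mono_null ?_ (ae_iff.1 (hinj.and hin))
    intro ω h hh
    obtain ⟨j, hj⟩ := hcon ω h hh.1
    exact hj (hh.2 j)
  refine ⟨Finset.univ.image ω, ?_, ?_, ?_⟩
  · intro x hx
    simp only [Finset.coe_image, Finset.coe_univ, Set.image_univ, Set.mem_range] at hx
    obtain ⟨j, rfl⟩ := hx
    exact hωC j
  · rw [Finset.card_image_of_injective _ hωi, Finset.card_univ, Fintype.card_fin, hN]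
    have hL : 0 ≤ Real.log 𝒩.card := Real.log_natCast_nonneg _
    have ht : 0 ≤ Real.log (Real.exp 1 / δ) := by
      apply Real.log_nonneg
      rw [le_div_iff₀ hδ0]
      have := Real.add_one_le_exp (1:ℝ)
      linarith
    refine (Nat.floor_le (by positivity)).trans (le_of_eq ?_)
    field_simp
  · intro a b hab hvol
    obtain ⟨p, hp, hpab, hpv⟩ := happrox a b hab hvol.le
    refine (hωG p hp hpv).trans ?_
    rw [← Set.ncard_image_of_injective _ hωi]
    refine Set.ncard_le_ncard ?_ ((Finset.finite_toSet _).subset (Set.sep_subset _ _))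
    rintro _ ⟨j, hj, rfl⟩
    refine ⟨by simp, fun i hi => ?_⟩
    have := hj i hi
    exact ⟨(hpab i).1.trans this.1, this.2.trans_le (hpab i).2⟩
end

section
/- Let d ≥ 2 and ε ∈ (0, 1/2]. Then N(ε, d) ≤ 12e · (4d ln ln(8/ε) + ln(1/ε)) / ε, where N(ε,d) is the inverse minimal dispersion. In particular there exists a set of at most this many points in [0,1]^d meeting every axis-parallel box of volume greater than ε. -/
open Finset

/-- The dispersion of a finite point set `P ⊆ [0,1]^d`: the supremum of volumes
of axis-parallel boxes in the cube disjoint from `P`. -/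
noncomputable def disp (d : ℕ) (P : Finset (Fin d → ℝ)) : ℝ :=
  sSup {v : ℝ | ∃ a b : Fin d → ℝ, (∀ i, 0 ≤ a i ∧ a i ≤ b i ∧ b i ≤ 1) ∧
    v = ∏ i, (b i - a i) ∧
    ∀ x ∈ P, x ∉ Set.univ.pi fun i => Set.Ico (a i) (b i)}

/-- Minimal dispersion over `n`-point subsets of the cube. -/
noncomputable def dispStar (d n : ℕ) : ℝ :=
  sInf {v : ℝ | ∃ P : Finset (Fin d → ℝ),
    (P : Set (Fin d → ℝ)) ⊆ (Set.univ.pi fun _ => Set.Icc (0:ℝ) 1) ∧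
    P.card = n ∧ v = disp d P}

/-- Inverse of the minimal dispersion. -/
noncomputable def Ninv (ε : ℝ) (d : ℕ) : ℕ :=
  sInf {n : ℕ | dispStar d n ≤ ε}

open MeasureTheory in
lemma avg_box {ι : Type*} (d : ℕ) (S : Finset ι) (lo hi : ι → Fin d → ℝ) (δ : ℝ)
    (hb : ∀ s ∈ S, ∀ i, 0 ≤ lo s i ∧ lo s i ≤ hi s i ∧ hi s i ≤ 1)
    (hv : ∀ s ∈ S, δ ≤ ∏ i, (hi s i - lo s i)) :
    ∃ x ∈ (Set.univ.pi fun _ : Fin d => Set.Icc (0:ℝ) 1),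
      δ * S.card ≤ ∑ s ∈ S, (Set.univ.pi fun i => Set.Ico (lo s i) (hi s i)).indicator (1 : (Fin d → ℝ) → ℝ) x := by
  classical
  set Q : Set (Fin d → ℝ) := Set.univ.pi fun _ : Fin d => Set.Icc (0:ℝ) 1 with hQ
  have hQv : volume Q = 1 := by
    rw [hQ, volume_pi_pi]; simp
  have hmeas : ∀ s, MeasurableSet (Set.univ.pi fun i => Set.Ico (lo s i) (hi s i)) := fun s =>
    MeasurableSet.univ_pi fun i => measurableSet_Ico
  have hint : ∀ s, IntegrableOn ((Set.univ.pi fun i => Set.Ico (lo s i) (hi s i)).indicator (1 : (Fin d → ℝ) → ℝ)) Q volume := by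
    intro s
    refine Integrable.indicator ?_ (hmeas s)
    exact integrableOn_const (by rw [hQv]; simp)
  obtain ⟨x, hx, hle⟩ := exists_setAverage_le (μ := volume) (s := Q)
    (f := fun x => ∑ s ∈ S, (Set.univ.pi fun i => Set.Ico (lo s i) (hi s i)).indicator (1 : (Fin d → ℝ) → ℝ) x)
    (by rw [hQv]; simp) (by rw [hQv]; simp) (integrable_finsetSum _ fun s _ => hint s)
  refine ⟨x, hx, le_trans ?_ hle⟩
  rw [setAverage_eq, integral_finsetSum _ fun s _ => hint s]
  have : volume.real Q = 1 := by simp [Measure.real, hQv]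
  rw [this, inv_one, one_smul, mul_comm, ← nsmul_eq_mul, ← Finset.sum_const]
  refine Finset.sum_le_sum fun s hs => ?_
  rw [integral_indicator_one (hmeas s), measureReal_restrict_apply (hmeas s), Set.inter_eq_left.2]
  · rw [Measure.real, Real.volume_pi_Ico_toReal (fun i => (hb s hs i).2.1)]
    exact hv s hs
  · intro y hy i hi'
    have := hy i hi'
    have h2 := hb s hs i
    exact ⟨h2.1.trans this.1, this.2.le.trans h2.2.2⟩

lemma greedy {ι : Type*} (d : ℕ) (lo hi : ι → Fin d → ℝ) (δ : ℝ) (S : Finset ι)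
    (hb : ∀ s ∈ S, ∀ i, 0 ≤ lo s i ∧ lo s i ≤ hi s i ∧ hi s i ≤ 1)
    (hv : ∀ s ∈ S, δ ≤ ∏ i, (hi s i - lo s i)) (hδ : δ ≤ 1) (n : ℕ) :
    ∃ P : Finset (Fin d → ℝ), (P : Set (Fin d → ℝ)) ⊆ (Set.univ.pi fun _ => Set.Icc (0:ℝ) 1) ∧
      P.card ≤ n ∧ ∃ R ⊆ S, (R.card : ℝ) ≤ S.card * (1 - δ) ^ n ∧
        ∀ s ∈ S, s ∉ R → ∃ x ∈ P, x ∈ Set.univ.pi fun i => Set.Ico (lo s i) (hi s i) := by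
  classical
  induction n with
  | zero => exact ⟨∅, by simp, by simp, S, subset_rfl, by simp, fun s h1 h2 => (h2 h1).elim⟩
  | succ n ih =>
    obtain ⟨P, hP, hc, R, hRS, hR, hit⟩ := ih
    obtain ⟨x, hx, hle⟩ := avg_box d R lo hi δ (fun s hs => hb s (hRS hs)) (fun s hs => hv s (hRS hs))
    set R' := R.filter fun s => x ∉ Set.univ.pi fun i => Set.Ico (lo s i) (hi s i) with hR'
    refine ⟨insert x P, ?_, (card_insert_le _ _).trans (by omega), R', (filter_subset _ _).trans hRS, ?_, ?_⟩
    · rw [coe_insert]; exact Set.insert_subset hx hP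
    · have h1 : ∑ s ∈ R, (Set.univ.pi fun i => Set.Ico (lo s i) (hi s i)).indicator (1 : (Fin d → ℝ) → ℝ) x
          = ((R.filter fun s => x ∈ Set.univ.pi fun i => Set.Ico (lo s i) (hi s i)).card : ℝ) := by
        rw [card_filter, Nat.cast_sum]
        refine sum_congr rfl fun s _ => ?_
        simp only [Set.indicator_apply]
        split_ifs <;> simp
      have h2 := card_filter_add_card_filter_not (s := R) (fun s => x ∈ Set.univ.pi fun i => Set.Ico (lo s i) (hi s i))
      rw [← hR'] at h2
      have h3 : ((R.filter fun s => x ∈ Set.univ.pi fun i => Set.Ico (lo s i) (hi s i)).card : ℝ) + R'.card = R.card := by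
        exact_mod_cast h2
      rw [h1] at hle
      rw [pow_succ]
      have := mul_le_mul_of_nonneg_right hR (sub_nonneg.2 hδ)
      nlinarith
    · intro s hs hsR
      by_cases h : s ∈ R
      · refine ⟨x, mem_insert_self _ _, ?_⟩
        by_contra hcon
        exact hsR (mem_filter.2 ⟨h, hcon⟩)
      · obtain ⟨y, hy, hy'⟩ := hit s hs h
        exact ⟨y, mem_insert_of_mem hy, hy'⟩

abbrev Code := (ℕ × ℕ) ⊕ (Σ _ : ℕ, ℕ × ℕ)

noncomputable def codeLo (d M : ℕ) : Code → ℝ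
  | Sum.inl (m, _) => m / (16 * d)
  | Sum.inr ⟨j, (m, _)⟩ => m * (1 / (2 ^ j * M))

noncomputable def codeHi (d M : ℕ) : Code → ℝ
  | Sum.inl (_, n) => 1 - n / (16 * d)
  | Sum.inr ⟨j, (m, k)⟩ => m * (1 / (2 ^ j * M)) + k * (1 / (2 ^ j * M))

noncomputable def codeWt (Λ : ℝ) : Code → ℝ
  | Sum.inl (m, n) => Real.exp (-1 / Λ) ^ m * Real.exp (-1 / Λ) ^ n
  | Sum.inr ⟨j, _⟩ => 1 / 2 ^ j

def codeSet (d M J : ℕ) : Finset Code :=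
  (range (16 * d + 1) ×ˢ range (16 * d + 1)).disjSum
    ((range J).sigma fun j => range (M * 2 ^ j) ×ˢ range (M + 1))

lemma codeWt_pos (Λ : ℝ) (c : Code) : 0 < codeWt Λ c := by
  rcases c with ⟨m, n⟩ | ⟨j, m, k⟩ <;> simp only [codeWt] <;> positivity

lemma geom_bound (Λ : ℝ) (hΛ : 0 < Λ) (n : ℕ) :
    ∑ i ∈ range n, Real.exp (-1 / Λ) ^ i ≤ Λ + 1 := by
  set r := Real.exp (-1 / Λ) with hr
  have h0 : 0 < r := Real.exp_pos _
  have h1 : r * (1 + 1 / Λ) ≤ 1 := by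
    have h2 : 1 + 1 / Λ ≤ Real.exp (1 / Λ) := by linarith [Real.add_one_le_exp (1 / Λ)]
    calc r * (1 + 1 / Λ) ≤ r * Real.exp (1 / Λ) := by gcongr
      _ = 1 := by rw [hr, ← Real.exp_add]; simp [neg_div]
  have h2 : r * (Λ + 1) ≤ Λ := by
    have : r * (Λ + 1) = r * (1 + 1 / Λ) * Λ := by field_simp
    rw [this]; nlinarith
  have h3 : r < 1 := by nlinarith
  have h4 : (∑ i ∈ range n, r ^ i) * (1 - r) = 1 - r ^ n := geom_sum_mul_neg r n
  have h5 : 0 < r ^ n := by positivity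
  have h6 : (∑ i ∈ range n, r ^ i) * (1 - r) ≤ (Λ + 1) * (1 - r) := by nlinarith
  exact le_of_mul_le_mul_right h6 (by linarith)

lemma codeWt_sum (d M J : ℕ) (Λ : ℝ) (hΛ : 1 ≤ Λ) (hM : (M : ℝ) ≤ 25 * Λ) (hJ : (J : ℝ) ≤ 3 * Λ) :
    ∑ c ∈ codeSet d M J, codeWt Λ c ≤ 1954 * Λ ^ 3 := by
  rw [codeSet, sum_disjSum, sum_product, sum_sigma]
  simp only [codeWt]
  have hA : ∑ x ∈ range (16 * d + 1), ∑ y ∈ range (16 * d + 1),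
      Real.exp (-1 / Λ) ^ x * Real.exp (-1 / Λ) ^ y ≤ (Λ + 1) * (Λ + 1) := by
    rw [← sum_mul_sum]
    have := geom_bound Λ (by linarith) (16 * d + 1)
    gcongr
  have hB : ∑ j ∈ range J, ∑ _s ∈ range (M * 2 ^ j) ×ˢ range (M + 1), (1 : ℝ) / 2 ^ j
      = J * (M * (M + 1)) := by
    have : ∀ j ∈ range J, ∑ _s ∈ range (M * 2 ^ j) ×ˢ range (M + 1), (1 : ℝ) / 2 ^ j = M * (M + 1) := by
      intro j _
      rw [sum_const, card_product, card_range, card_range, nsmul_eq_mul]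
      push_cast
      field_simp
    rw [sum_congr rfl this, sum_const, card_range, nsmul_eq_mul]
  have hB' : (J : ℝ) * (M * (M + 1)) ≤ 3 * Λ * (25 * Λ * (25 * Λ + Λ)) := by gcongr
  have hA' : (Λ + 1) * (Λ + 1) ≤ 4 * Λ ^ 3 := by nlinarith [mul_nonneg (sub_nonneg.2 hΛ) (sq_nonneg Λ)]
  rw [hB]
  nlinarith

lemma exp_neg_two_le (x : ℝ) (h0 : 0 ≤ x) (h1 : x ≤ 1 / 2) : Real.exp (-(2 * x)) ≤ 1 - x := by
  have h := Real.add_one_le_exp (2 * x)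
  have hp := Real.exp_pos (-(2 * x))
  have hm : Real.exp (-(2 * x)) * Real.exp (2 * x) = 1 := by rw [← Real.exp_add]; simp
  have h2 : 1 ≤ (1 - x) * Real.exp (2 * x) := by nlinarith
  have h3 : Real.exp (-(2 * x)) * 1 ≤ Real.exp (-(2 * x)) * ((1 - x) * Real.exp (2 * x)) :=
    mul_le_mul_of_nonneg_left h2 hp.le
  have h4 : Real.exp (-(2 * x)) * ((1 - x) * Real.exp (2 * x)) = 1 - x := by
    linear_combination (1 - x) * hm
  linarith

lemma code_exists (d M J : ℕ) (hd : 1 ≤ d) (Λ : ℝ) (hΛ : 1 ≤ Λ) (hM : 24 * Λ ≤ M)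
    (hJ : 2 * Λ ≤ J) (a b : ℝ) (ha : 0 ≤ a) (hab : a < b) (hb : b ≤ 1)
    (hw : -Real.log (b - a) < Λ) :
    ∃ c ∈ codeSet d M J, a ≤ codeLo d M c ∧ codeLo d M c ≤ codeHi d M c ∧ codeHi d M c ≤ b ∧
      Real.exp ((1 + 1 / (2 * Λ)) * Real.log (b - a) - 1 / (2 * d)) ≤ codeHi d M c - codeLo d M c ∧
      Real.exp ((16 * d / Λ + 1) * Real.log (b - a) - 2 / Λ) ≤ codeWt Λ c := by
  set w := b - a with hwdef
  have hw0 : 0 < w := by linarith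
  have hw1 : w ≤ 1 := by linarith
  have hlog : Real.log w ≤ 0 := Real.log_nonpos hw0.le hw1
  have hd' : (1 : ℝ) ≤ d := by exact_mod_cast hd
  have hΛ0 : 0 < Λ := by linarith
  have hD : (0 : ℝ) < 16 * d := by linarith
  rcases le_or_gt (1 / 2) w with hcase | hcase
  · set m := ⌈a * (16 * d)⌉₊ with hm
    set n := ⌈(1 - b) * (16 * d)⌉₊ with hn
    have hm1 : a * (16 * d) ≤ m := Nat.le_ceil _
    have hm2 : (m : ℝ) < a * (16 * d) + 1 := Nat.ceil_lt_add_one (by positivity)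
    have hn1 : (1 - b) * (16 * d) ≤ n := Nat.le_ceil _
    have hn2 : (n : ℝ) < (1 - b) * (16 * d) + 1 := Nat.ceil_lt_add_one (mul_nonneg (by linarith) hD.le)
    have hmr : m ≤ 16 * d := by
      rw [hm]; apply Nat.ceil_le.2; push_cast; nlinarith
    have hnr : n ≤ 16 * d := by
      rw [hn]; apply Nat.ceil_le.2; push_cast; nlinarith
    have hlen : Real.exp ((1 + 1 / (2 * Λ)) * Real.log w - 1 / (2 * d)) ≤
        1 - (n : ℝ) / (16 * d) - m / (16 * d) := by
      have h1 : (n : ℝ) / (16 * d) ≤ (1 - b) + 1 / (16 * d) := by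
        rw [div_le_iff₀ hD]; field_simp; linarith
      have h2 : (m : ℝ) / (16 * d) ≤ a + 1 / (16 * d) := by
        rw [div_le_iff₀ hD]; field_simp; linarith
      have h3 : Real.exp (-(2 * (1 / (4 * d)))) ≤ 1 - 1 / (4 * (d : ℝ)) := by
        apply exp_neg_two_le _ (by positivity)
        rw [div_le_div_iff₀ (by linarith) (by norm_num)]; linarith
      have h4 : Real.exp ((1 + 1 / (2 * Λ)) * Real.log w - 1 / (2 * d)) ≤
          w * Real.exp (-(2 * (1 / (4 * d)))) := by
        nth_rewrite 2 [← Real.exp_log hw0]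
        rw [← Real.exp_add]
        apply Real.exp_le_exp.2
        have : 2 * (1 / (4 * (d : ℝ))) = 1 / (2 * d) := by field_simp; norm_num
        rw [this]
        have : (1 / (2 * Λ)) * Real.log w ≤ 0 := mul_nonpos_of_nonneg_of_nonpos (by positivity) hlog
        linarith
      have h5 : w * Real.exp (-(2 * (1 / (4 * d)))) ≤ w * (1 - 1 / (4 * (d : ℝ))) := by gcongr
      have h6 : 2 * (1 / (16 * (d : ℝ))) ≤ w * (1 / (4 * d)) := by
        have : 2 * (1 / (16 * (d : ℝ))) = 1 / 2 * (1 / (4 * d)) := by field_simp; norm_num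
        rw [this]; gcongr
      linarith
    refine ⟨Sum.inl (m, n), ?_, ?_, ?_, ?_, ?_, ?_⟩
    · simp only [codeSet, inl_mem_disjSum, mem_product, mem_range]; omega
    · simp only [codeLo]; rw [le_div_iff₀ hD]; exact hm1
    · simp only [codeLo, codeHi]
      linarith [Real.exp_pos ((1 + 1 / (2 * Λ)) * Real.log w - 1 / (2 * d))]
    · simp only [codeHi]
      have : 1 - b ≤ (n : ℝ) / (16 * d) := by rw [le_div_iff₀ hD]; exact hn1
      linarith
    · simpa only [codeHi, codeLo] using hlen
    · simp only [codeWt]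
      rw [← pow_add, ← Real.exp_nat_mul]
      apply Real.exp_le_exp.2
      have h1 : 1 - w ≤ -Real.log w := by linarith [Real.log_le_sub_one_of_pos hw0]
      have h2 : ((m + n : ℕ) : ℝ) ≤ 16 * d * (-Real.log w) + 2 := by
        push_cast
        nlinarith
      have h3 : ((m + n : ℕ) : ℝ) * (-1 / Λ) = -(((m + n : ℕ) : ℝ) / Λ) := by ring
      have h4 : ((m + n : ℕ) : ℝ) / Λ ≤ (16 * d * (-Real.log w) + 2) / Λ := by gcongr
      have h5 : (16 * d * (-Real.log w) + 2) / Λ = -(16 * d / Λ * Real.log w) + 2 / Λ := by ring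
      rw [h3]
      linarith
  · obtain ⟨j, hj1, hj2⟩ := exists_nat_pow_near (x := 1 / w) (y := 2)
      (by rw [le_div_iff₀ hw0]; linarith) (by norm_num)
    have hpj : (0 : ℝ) < 2 ^ j := by positivity
    have hM0 : (0 : ℝ) < M := by linarith
    have hwj : w * 2 ^ j ≤ 1 := by rw [le_div_iff₀ hw0] at hj1; linarith
    have hwj2 : 1 < w * 2 ^ j * 2 := by rw [div_lt_iff₀ hw0, pow_succ] at hj2; linarith
    set h : ℝ := 1 / (2 ^ j * M) with hh
    have hh0 : 0 < h := by positivity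
    have hhM : h * (2 ^ j * M) = 1 := by rw [hh]; field_simp
    have hhw : h * M < 2 * w := by
      have : h * M * 2 ^ j < 2 * w * 2 ^ j := by nlinarith
      exact lt_of_mul_lt_mul_right this hpj.le
    have hhw' : w ≤ h * M := by
      have : w * 2 ^ j ≤ h * M * 2 ^ j := by nlinarith
      exact le_of_mul_le_mul_right this hpj
    set m := ⌈a / h⌉₊ with hm
    have hm1 : a ≤ m * h := by rw [← div_le_iff₀ hh0]; exact Nat.le_ceil _
    have hm2 : (m : ℝ) * h < a + h := by
      have : (m : ℝ) < a / h + 1 := Nat.ceil_lt_add_one (by positivity)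
      have := mul_lt_mul_of_pos_right this hh0
      have e : (a / h + 1) * h = a + h := by field_simp
      linarith
    have hwh : h < w := by nlinarith
    have hx0 : 0 < b - m * h := by linarith
    set k := ⌊(b - m * h) / h⌋₊ with hk
    have hk1 : (k : ℝ) * h ≤ b - m * h := by
      rw [← le_div_iff₀ hh0]; exact Nat.floor_le (by positivity)
    have hk2 : b - m * h < k * h + h := by
      have : (b - m * h) / h < k + 1 := Nat.lt_floor_add_one _
      rw [div_lt_iff₀ hh0] at this; linarith
    have hjlog : (j : ℝ) * Real.log 2 ≤ -Real.log w := by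
      have := Real.log_le_log hpj hj1
      rw [Real.log_pow, one_div, Real.log_inv] at this
      exact this
    refine ⟨Sum.inr ⟨j, (m, k)⟩, ?_, ?_, ?_, ?_, ?_, ?_⟩
    · simp only [codeSet, inr_mem_disjSum, mem_sigma, mem_product, mem_range]
      refine ⟨?_, ?_, ?_⟩
      · have h2 := Real.log_two_gt_d9
        have : (j : ℝ) < J := by
          have : (j : ℝ) * 0.5 ≤ j * Real.log 2 := by gcongr; linarith
          linarith
        exact_mod_cast this
      · have : (m : ℝ) < M * 2 ^ j := by
          have h1 : (m : ℝ) * h < M * 2 ^ j * h := by nlinarith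
          exact lt_of_mul_lt_mul_right h1 hh0.le
        exact_mod_cast this
      · have : (k : ℝ) ≤ M := by
          have h1 : (k : ℝ) * h ≤ M * h := by nlinarith
          exact le_of_mul_le_mul_right h1 hh0
        have : k ≤ M := by exact_mod_cast this
        omega
    · simpa only [codeLo] using hm1
    · simp only [codeLo, codeHi]
      have : 0 ≤ (k : ℝ) * h := by positivity
      linarith
    · simp only [codeHi]; rw [← hh]; linarith
    · simp only [codeHi, codeLo]; rw [← hh]
      have h4M : (4 : ℝ) / M ≤ 1 / 2 := by rw [div_le_div_iff₀ hM0 (by norm_num)]; linarith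
      have e1 := exp_neg_two_le (4 / M) (by positivity) h4M
      have e2 : Real.exp ((1 + 1 / (2 * Λ)) * Real.log w - 1 / (2 * d)) ≤
          w * Real.exp (-(2 * (4 / M))) := by
        nth_rewrite 2 [← Real.exp_log hw0]
        rw [← Real.exp_add]
        apply Real.exp_le_exp.2
        have l1 : Real.log w ≤ -Real.log 2 := by
          rw [← Real.log_inv]; apply Real.log_le_log hw0; linarith
        have l2 := Real.log_two_gt_d9
        have l3 : (1 / (2 * Λ)) * Real.log w ≤ (1 / (2 * Λ)) * (-(2 / 3)) := by
          gcongr; linarith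
        have l4 : 2 * (4 / (M : ℝ)) ≤ (1 / (2 * Λ)) * (2 / 3) := by
          have : 2 * (4 / (M : ℝ)) = 8 / M := by ring
          rw [this]
          have : (1 / (2 * Λ)) * (2 / 3) = 1 / (3 * Λ) := by field_simp
          rw [this, div_le_div_iff₀ hM0 (by linarith)]; linarith
        have l5 : 0 ≤ 1 / (2 * (d : ℝ)) := by positivity
        linarith
      have e3 : w * Real.exp (-(2 * (4 / M))) ≤ w * (1 - 4 / (M : ℝ)) := by gcongr
      have e4 : 2 * h ≤ w * (4 / M) := by
        rw [show w * (4 / (M : ℝ)) = (w * 4) / M by ring, le_div_iff₀ hM0]; linarith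
      linarith
    · simp only [codeWt]
      have e1 : (1 : ℝ) / 2 ^ j = Real.exp (-(j * Real.log 2)) := by
        rw [Real.exp_neg, Real.exp_nat_mul, Real.exp_log (by norm_num), one_div]
      have e2 : w ≤ 1 / 2 ^ j := by rw [le_div_iff₀ hpj]; exact hwj
      refine le_trans ?_ e2
      nth_rewrite 2 [← Real.exp_log hw0]
      apply Real.exp_le_exp.2
      have : 16 * d / Λ * Real.log w ≤ 0 := mul_nonpos_of_nonneg_of_nonpos (by positivity) hlog
      have : 0 ≤ 2 / Λ := by positivity
      linarith

lemma main_exists (d : ℕ) (hd : 2 ≤ d) (ε : ℝ) (hε : ε ∈ Set.Ioc (0:ℝ) (1/2)) :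
    ∃ P : Finset (Fin d → ℝ),
      (P : Set (Fin d → ℝ)) ⊆ (Set.univ.pi fun _ => Set.Icc (0:ℝ) 1) ∧
      (P.card : ℝ) ≤
        12 * Real.exp 1 * (4 * d * Real.log (Real.log (8/ε)) + Real.log (1/ε)) / ε ∧
      ∀ a b : Fin d → ℝ, (∀ i, 0 ≤ a i ∧ a i ≤ b i ∧ b i ≤ 1) →
        ε < ∏ i, (b i - a i) →
        ∃ x ∈ P, x ∈ Set.univ.pi fun i => Set.Ico (a i) (b i) := by
  classical
  obtain ⟨hε0, hε1⟩ := hε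
  set L := Real.log (1 / ε) with hL
  set Λ := Real.log (8 / ε) with hΛ
  set ℓ := Real.log Λ with hℓ
  have hlogε : Real.log ε = -L := by rw [hL, one_div, Real.log_inv, neg_neg]
  have l2 := Real.log_two_gt_d9
  have hΛL : Λ = 3 * Real.log 2 + L := by
    have h8 : (8 : ℝ) = 2 ^ 3 := by norm_num
    rw [hΛ, Real.log_div (by norm_num) hε0.ne', hlogε, h8, Real.log_pow]; push_cast; ring
  have hL2 : Real.log 2 ≤ L := by
    rw [hL]; apply Real.log_le_log (by norm_num); rw [le_div_iff₀ hε0]; linarith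
  have hee := Real.exp_one_lt_d9
  have hΛe : Real.exp 1 ≤ Λ := by linarith
  have hΛ1 : 1 ≤ Λ := by linarith
  have hΛ0 : 0 < Λ := by linarith
  have hℓ1 : 1 ≤ ℓ := by rw [hℓ, Real.le_log_iff_exp_le hΛ0]; exact hΛe
  have hdR : (2 : ℝ) ≤ d := by exact_mod_cast hd
  have hd0 : (0 : ℝ) < d := by linarith
  set M := ⌈24 * Λ⌉₊ with hM
  set J := ⌈2 * Λ⌉₊ with hJ
  have hM1 : 24 * Λ ≤ M := Nat.le_ceil _
  have hM2 : (M : ℝ) ≤ 25 * Λ := by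
    have := Nat.ceil_lt_add_one (a := 24 * Λ) (by positivity); linarith
  have hJ1 : 2 * Λ ≤ J := Nat.le_ceil _
  have hJ2 : (J : ℝ) ≤ 3 * Λ := by
    have := Nat.ceil_lt_add_one (a := 2 * Λ) (by positivity); linarith
  set δ := ε * Real.exp (-1) with hδ
  set S : Finset (Fin d → Code) := (Fintype.piFinset fun _ : Fin d => codeSet d M J).filter fun s =>
    (∀ i, 0 ≤ codeLo d M (s i) ∧ codeLo d M (s i) ≤ codeHi d M (s i) ∧ codeHi d M (s i) ≤ 1) ∧
    δ ≤ ∏ i, (codeHi d M (s i) - codeLo d M (s i)) ∧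
    Real.exp (-(18 * d + L)) ≤ ∏ i, codeWt Λ (s i) with hS
  have hScard : (S.card : ℝ) ≤ Real.exp (29 * d * ℓ + L) := by
    have h1 : (S.card : ℝ) * Real.exp (-(18 * d + L)) ≤ (1954 * Λ ^ 3) ^ d := by
      calc (S.card : ℝ) * Real.exp (-(18 * d + L)) = ∑ s ∈ S, Real.exp (-(18 * d + L)) := by
            rw [sum_const, nsmul_eq_mul]
        _ ≤ ∑ s ∈ S, ∏ i, codeWt Λ (s i) := sum_le_sum fun s hs => (mem_filter.1 hs).2.2.2
        _ ≤ ∑ s ∈ Fintype.piFinset fun _ : Fin d => codeSet d M J, ∏ i, codeWt Λ (s i) :=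
            sum_le_sum_of_subset_of_nonneg (filter_subset _ _)
              fun s _ _ => prod_nonneg fun i _ => (codeWt_pos Λ _).le
        _ = (∑ c ∈ codeSet d M J, codeWt Λ c) ^ d := by
            rw [← prod_univ_sum (fun _ : Fin d => codeSet d M J) (fun _ c => codeWt Λ c)]
            simp
        _ ≤ (1954 * Λ ^ 3) ^ d := by
            apply pow_le_pow_left₀ (sum_nonneg fun c _ => (codeWt_pos Λ c).le)
            exact codeWt_sum d M J Λ hΛ1 hM2 hJ2
    have h2 : 1954 * Λ ^ 3 ≤ Real.exp (8 + 3 * ℓ) := by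
      have e1 : Real.exp (3 * ℓ) = Λ ^ 3 := by
        have := Real.exp_nat_mul ℓ 3
        push_cast at this
        rw [this, hℓ, Real.exp_log hΛ0]
      have e2 : (1954 : ℝ) ≤ Real.exp 8 := by
        have := Real.exp_nat_mul 1 8
        push_cast at this
        rw [mul_one] at this
        rw [this]
        calc (1954 : ℝ) ≤ 2.7 ^ 8 := by norm_num
          _ ≤ _ := by gcongr; linarith [Real.exp_one_gt_d9]
      rw [Real.exp_add, e1]; gcongr
    have h3 : (1954 * Λ ^ 3) ^ d ≤ Real.exp (d * (8 + 3 * ℓ)) := by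
      rw [Real.exp_nat_mul]; gcongr
    have h4 : (S.card : ℝ) = S.card * Real.exp (-(18 * d + L)) * Real.exp (18 * d + L) := by
      rw [mul_assoc, ← Real.exp_add]; simp
    rw [h4]
    calc _ ≤ Real.exp (d * (8 + 3 * ℓ)) * Real.exp (18 * d + L) := by gcongr; linarith
      _ = Real.exp (d * (8 + 3 * ℓ) + (18 * d + L)) := (Real.exp_add _ _).symm
      _ ≤ _ := by apply Real.exp_le_exp.2; nlinarith
  have hexp1 : Real.exp (-1) * Real.exp 1 = 1 := by rw [← Real.exp_add]; simp
  have hexpm : Real.exp (-1) ≤ 1 := Real.exp_le_one_iff.2 (by norm_num)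
  have hδ0 : 0 < δ := by positivity
  have hδ1 : δ ≤ 1 / 2 := by rw [hδ]; nlinarith [Real.exp_pos (-1)]
  set X := 12 * Real.exp 1 * (4 * d * ℓ + L) / ε with hX
  have hXδ : X * δ = 12 * (4 * d * ℓ + L) := by
    rw [hX, hδ]
    calc _ = 12 * (4 * d * ℓ + L) * (Real.exp (-1) * Real.exp 1) := by field_simp
      _ = _ := by rw [hexp1, mul_one]
  have hdℓ : 2 ≤ d * ℓ := by nlinarith
  have hX0 : 0 ≤ X := by
    rw [hX]; apply div_nonneg _ hε0.le
    apply mul_nonneg (by positivity); nlinarith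
  set n := ⌊X⌋₊ with hn
  have hn1 : (n : ℝ) ≤ X := Nat.floor_le hX0
  have hn2 : X < n + 1 := Nat.lt_floor_add_one X
  obtain ⟨P, hP, hPc, R, hRS, hRc, hit⟩ := greedy d (fun s i => codeLo d M (s i))
    (fun s i => codeHi d M (s i)) δ S (fun s hs => (mem_filter.1 hs).2.1)
    (fun s hs => (mem_filter.1 hs).2.2.1) (by linarith) n
  have hR0 : R = ∅ := by
    rw [← card_eq_zero]
    have h1 : (1 - δ) ^ n ≤ Real.exp (n * (-δ)) := by
      rw [Real.exp_nat_mul]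
      apply pow_le_pow_left₀ (by linarith)
      linarith [Real.add_one_le_exp (-δ)]
    have h2 : (R.card : ℝ) < 1 := by
      calc (R.card : ℝ) ≤ _ := hRc
        _ ≤ Real.exp (29 * d * ℓ + L) * Real.exp (n * (-δ)) := by
            gcongr
            exact pow_nonneg (by linarith) _
        _ = Real.exp (29 * d * ℓ + L + n * (-δ)) := (Real.exp_add _ _).symm
        _ < 1 := by
            rw [Real.exp_lt_one_iff]
            nlinarith
    have h3 : R.card < 1 := by exact_mod_cast h2
    omega
  refine ⟨P, hP, le_trans (by exact_mod_cast hPc) hn1, ?_⟩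
  intro a b hab hvol
  have hwpos : ∀ i, 0 < b i - a i := by
    intro i
    rcases (sub_nonneg.2 (hab i).2.1).eq_or_lt with h | h
    · have : ∏ i, (b i - a i) = 0 := prod_eq_zero (mem_univ i) h.symm
      linarith
    · exact h
  have hlogsum : -L < ∑ i, Real.log (b i - a i) := by
    rw [← Real.log_prod (fun i _ => (hwpos i).ne'), ← hlogε]
    exact Real.log_lt_log hε0 hvol
  have hlognp : ∀ i, Real.log (b i - a i) ≤ 0 := fun i =>
    Real.log_nonpos (hwpos i).le (by linarith [(hab i).1, (hab i).2.2])
  have hlogi : ∀ i, -Real.log (b i - a i) < Λ := by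
    intro i
    have := single_le_sum (f := fun i => -Real.log (b i - a i)) (s := univ)
      (fun i _ => neg_nonneg.2 (hlognp i)) (mem_univ i)
    rw [sum_neg_distrib] at this
    linarith
  choose c hcT hc1 hc2 hc3 hc4 hc5 using fun i => code_exists d M J (by omega) Λ hΛ1 hM1 hJ1 (a i) (b i)
    (hab i).1 (by linarith [hwpos i]) (hab i).2.2 (hlogi i)
  have hLΛ : L / Λ ≤ 1 := by rw [div_le_one hΛ0]; linarith
  have hcS : c ∈ S := by
    rw [hS, mem_filter]
    refine ⟨Fintype.mem_piFinset.2 hcT, fun i => ⟨(hab i).1.trans (hc1 i), hc2 i, (hc3 i).trans (hab i).2.2⟩, ?_, ?_⟩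
    · refine le_trans ?_ (prod_le_prod (fun i _ => (Real.exp_pos _).le) fun i _ => hc4 i)
      rw [← Real.exp_sum, sum_sub_distrib, ← mul_sum, sum_const, card_univ, Fintype.card_fin, nsmul_eq_mul]
      have e1 : δ = Real.exp (-L - 1) := by
        rw [hδ, sub_eq_add_neg, Real.exp_add, ← hlogε, Real.exp_log hε0]
      rw [e1]
      apply Real.exp_le_exp.2
      have e2 : (d : ℝ) * (1 / (2 * d)) = 1 / 2 := by field_simp
      rw [e2]
      have e3 : (1 + 1 / (2 * Λ)) * (-L) ≤ (1 + 1 / (2 * Λ)) * ∑ i, Real.log (b i - a i) := by gcongr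
      have e4 : (1 + 1 / (2 * Λ)) * (-L) = -L - (L / Λ) / 2 := by field_simp; ring
      linarith
    · refine le_trans ?_ (prod_le_prod (fun i _ => (Real.exp_pos _).le) fun i _ => hc5 i)
      rw [← Real.exp_sum, sum_sub_distrib, ← mul_sum, sum_const, card_univ, Fintype.card_fin, nsmul_eq_mul]
      apply Real.exp_le_exp.2
      have e3 : (16 * d / Λ + 1) * (-L) ≤ (16 * d / Λ + 1) * ∑ i, Real.log (b i - a i) := by gcongr
      have e4 : (16 * d / Λ + 1) * (-L) = -(16 * d * (L / Λ)) - L := by field_simp; ring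
      have e5 : 16 * d * (L / Λ) ≤ 16 * d * 1 := by gcongr
      have e6 : (d : ℝ) * (2 / Λ) ≤ d * 2 := by
        gcongr
        exact div_le_self (by norm_num) hΛ1
      linarith
  obtain ⟨x, hx, hxb⟩ := hit c hcS (by simp [hR0])
  refine ⟨x, hx, fun i hi => ?_⟩
  have := hxb i hi
  exact ⟨(hc1 i).trans this.1, this.2.trans_le (hc3 i)⟩

/-- Main theorem: `N(ε,d) ≤ 12e (4 d ln ln(8/ε) + ln(1/ε)) / ε` for `d ≥ 2`,
`0 < ε ≤ 1/2`; in particular there is a point set of at most this size meeting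
every axis-parallel box of volume greater than `ε`. -/
theorem stmt_17 (d : ℕ) (hd : 2 ≤ d) (ε : ℝ) (hε : ε ∈ Set.Ioc (0:ℝ) (1/2)) :
    (Ninv ε d : ℝ) ≤
      12 * Real.exp 1 * (4 * d * Real.log (Real.log (8/ε)) + Real.log (1/ε)) / ε ∧
    ∃ P : Finset (Fin d → ℝ),
      (P : Set (Fin d → ℝ)) ⊆ (Set.univ.pi fun _ => Set.Icc (0:ℝ) 1) ∧
      (P.card : ℝ) ≤
        12 * Real.exp 1 * (4 * d * Real.log (Real.log (8/ε)) + Real.log (1/ε)) / ε ∧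
      ∀ a b : Fin d → ℝ, (∀ i, 0 ≤ a i ∧ a i ≤ b i ∧ b i ≤ 1) →
        ε < ∏ i, (b i - a i) →
        ∃ x ∈ P, x ∈ Set.univ.pi fun i => Set.Ico (a i) (b i) := by
  obtain ⟨P, hP, hc, hit⟩ := main_exists d hd ε hε
  refine ⟨le_trans ?_ hc, P, hP, hc, hit⟩
  have hdisp : disp d P ≤ ε := by
    apply Real.sSup_le _ hε.1.le
    rintro v ⟨a, b, hab, rfl, hno⟩
    by_contra hcon
    obtain ⟨x, hx, hxb⟩ := hit a b hab (not_le.1 hcon)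
    exact hno x hx hxb
  have hstar : dispStar d P.card ≤ ε := by
    refine le_trans (csInf_le ⟨0, ?_⟩ ⟨P, hP, rfl, rfl⟩) hdisp
    rintro v ⟨Q, _, _, rfl⟩
    apply Real.sSup_nonneg
    rintro v ⟨a, b, hab, rfl, _⟩
    exact prod_nonneg fun i _ => sub_nonneg.2 (hab i).2.1
  exact_mod_cast Nat.sInf_le hstar
end
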